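/- arXiv:2402.18290 — 2 statements merged into one kernel-verified Lean document; each statement's English description precedes it below -/
import Mathlib

section
/- For h = 5, the boundary map ∂ is surjective onto the automorphisms of the boundary forms: for every group automorphism φ of ℤ⁵/A₅ℤ⁵ satisfying ∂λ(φ(ξ),φ(η)) = ∂λ(ξ,η) and ∂θ(φ(ξ)) = ∂θ(ξ) for all ξ, η, there exists P ∈ GL₅(ℤ) with P^T A₅ P = A₅ such that φ([x]) = [(P^T)^{-1} x] for all x ∈ ℤ⁵. Equivalently, the boundary automorphism set bAut(ℤ⁵, [Q₅]) is trivial. -/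
open Matrix

noncomputable section

/-- The matrix `Q_h`: first row all `4`; in rows `2,…,h` diagonal and
above-diagonal entries are `2`, below-diagonal entries are `0`. -/
def Qmat (h : ℕ) : Matrix (Fin h) (Fin h) ℤ :=
  Matrix.of fun i j => if (i : ℕ) = 0 then 4 else if i ≤ j then 2 else 0

/-- `A_h = Q_h + Q_hᵀ`. -/
def Amat (h : ℕ) : Matrix (Fin h) (Fin h) ℤ := Qmat h + (Qmat h)ᵀ

/-- `A_h` viewed as a rational matrix. -/
def AmatQ (h : ℕ) : Matrix (Fin h) (Fin h) ℚ := (Amat h).map (Int.cast)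

/-- `Q_h` viewed as a rational matrix. -/
def QmatQ (h : ℕ) : Matrix (Fin h) (Fin h) ℚ := (Qmat h).map (Int.cast)

/-- The cokernel `ℤ^h / A_h ℤ^h`. -/
abbrev Coker (h : ℕ) := (Fin h → ℤ) ⧸ LinearMap.range ((Amat h).mulVecLin)

/-- The quotient map `ℤ^h → ℤ^h / A_h ℤ^h`. -/
def ckMk {h : ℕ} (x : Fin h → ℤ) : Coker h := Submodule.Quotient.mk x

def ratVec {h : ℕ} (x : Fin h → ℤ) : Fin h → ℚ := fun i => (x i : ℚ)

/-- The boundary linking form `∂λ` computed on representatives: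
`x ᵀ A_h⁻¹ y mod ℤ`, valued in `ℚ/ℤ`. -/
def linkR (h : ℕ) (x y : Fin h → ℤ) : AddCircle (1 : ℚ) :=
  ((ratVec x ⬝ᵥ ((AmatQ h)⁻¹ *ᵥ ratVec y) : ℚ) : AddCircle (1 : ℚ))

/-- The boundary quadratic form `∂θ` computed on representatives:
`xᵀ A_h⁻¹ Q_h A_h⁻¹ x mod ℤ`, valued in `ℚ/ℤ`. -/
def quadR (h : ℕ) (x : Fin h → ℤ) : AddCircle (1 : ℚ) :=
  ((ratVec x ⬝ᵥ (((AmatQ h)⁻¹ * QmatQ h * (AmatQ h)⁻¹) *ᵥ ratVec x) : ℚ) : AddCircle (1 : ℚ))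

/-!
The vectors `e₀ + eⱼ` form a basis of the root lattice `D_h`, and `A_h` is twice their Gram matrix:
up to the scale `√2`, the form `A_h` is the lattice `D_h`. If `z` is twice the orthonormal
coordinate vector of the dual vector represented by `x`, then `∂λ` is `z ⬝ᵥ z' / 8` and `∂θ` is
`z ⬝ᵥ z / 16` modulo `ℤ`. The classes with `z = 2 eᵢ` are mapped by a `∂θ`-preserving `φ` to
classes with `z = 2 y` (otherwise `z` is odd and its norm is `h ≠ 4` modulo `8`), where the vectors
`y` have norm `1` modulo `4` and even mutual products. Hence their sets of odd coordinates have
size `1` modulo `4` and even pairwise intersections, and for `h ≤ 5` this only leaves a permutation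
of the singletons, so `φ` agrees on these classes with a signed permutation, which is an isometry
of `D_h`. On a class with `z` odd, the products with these classes determine `z` modulo `4`, and the
norm of `z` modulo `16` removes the remaining ambiguity, which is the coordinate sum modulo `8`.
Classes with `z` odd generate the group.
-/

section Parity

variable {ι : Type*} [Fintype ι]

theorem odd_coe_units (s : ℤˣ) : Odd (s : ℤ) := by
  rcases Int.units_eq_one_or s with rfl | rfl <;> decide

theorem exists_unit_modEq_four_of_odd {a : ℤ} (ha : Odd a) : ∃ s : ℤˣ, a ≡ s [ZMOD 4] := by
  rw [Int.odd_iff] at ha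
  by_cases h : a % 4 = 1
  · exact ⟨1, h⟩
  · refine ⟨-1, ?_⟩
    simp only [Int.ModEq, Units.val_neg, Units.val_one]
    omega

/-- The set of coordinates at which an integer vector is odd, i.e. its reduction mod `2`
regarded as a subset of the index type. -/
def oddSupport (y : ι → ℤ) : Finset ι := {k | Odd (y k)}

@[simp]
theorem mem_oddSupport {y : ι → ℤ} {k : ι} : k ∈ oddSupport y ↔ Odd (y k) := by
  simp [oddSupport]

theorem dotProduct_modEq_card_inter_oddSupport [DecidableEq ι] (y w : ι → ℤ) :
    y ⬝ᵥ w ≡ (oddSupport y ∩ oddSupport w).card [ZMOD 2] := by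
  rw [Finset.card_eq_sum_ones, ← Finset.univ_inter (_ ∩ _), ← Finset.sum_ite_mem]
  push_cast
  refine Int.ModEq.sum fun k _ => ?_
  simp only [Finset.mem_inter, mem_oddSupport, ← Int.odd_mul]
  split_ifs with h
  · exact Int.odd_iff.1 h
  · exact Int.even_iff.1 (Int.not_odd_iff_even.1 h)

theorem dotProduct_self_modEq_card_oddSupport (y : ι → ℤ) :
    y ⬝ᵥ y ≡ (oddSupport y).card [ZMOD 4] := by
  classical
  rw [Finset.card_eq_sum_ones, ← Finset.univ_inter (oddSupport y), ← Finset.sum_ite_mem]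
  push_cast
  refine Int.ModEq.sum fun k _ => ?_
  simp only [mem_oddSupport, ← sq]
  split_ifs with h
  · exact Int.sq_mod_four_eq_one_of_odd h
  · obtain ⟨a, ha⟩ := Int.not_odd_iff_even.1 h
    exact Int.modEq_zero_iff_dvd.2 ⟨a ^ 2, by rw [ha]; ring⟩

theorem dotProduct_self_modEq_card_of_odd {y : ι → ℤ} (hy : ∀ k, Odd (y k)) :
    y ⬝ᵥ y ≡ Fintype.card ι [ZMOD 8] := by
  rw [← Finset.card_univ, Finset.card_eq_sum_ones]
  push_cast
  refine Int.ModEq.sum fun k _ => ?_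
  rw [← sq]
  exact (Int.modEq_iff_dvd.2 (Int.eight_dvd_sq_sub_one_of_odd (hy k))).symm

theorem odd_sum_of_oddSupport_eq_singleton {y : ι → ℤ} {k : ι} (hy : oddSupport y = {k}) :
    Odd (∑ j, y j) := by
  classical
  have h := dotProduct_modEq_card_inter_oddSupport y 1
  rw [hy, dotProduct_one, Finset.inter_eq_left.2 (by simp), Finset.card_singleton] at h
  exact Int.odd_iff.2 h

/-- Expanding `(z + 4u)² = z² + 8zu + 16u²`, equality of norms mod `16` forces `∑ u` to be even. -/
theorem sum_modEq_eight_of_dotProduct_self_modEq {w z : ι → ℤ} (hz : ∀ k, Odd (z k))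
    (hwz : ∀ k, w k ≡ z k [ZMOD 4]) (hnorm : w ⬝ᵥ w ≡ z ⬝ᵥ z [ZMOD 16]) :
    ∑ k, w k ≡ ∑ k, z k [ZMOD 8] := by
  have hterm : ∀ k, w k * w k - z k * z k ≡ 2 * (w k - z k) [ZMOD 16] := by
    intro k
    obtain ⟨u, hu⟩ := (hwz k).symm.dvd
    obtain ⟨a, ha⟩ := hz k
    refine Int.modEq_iff_dvd.2 ⟨-(u * a + u * u), ?_⟩
    rw [eq_add_of_sub_eq hu, ha]
    ring
  have hsum := Int.ModEq.sum (s := Finset.univ) fun k _ => hterm k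
  rw [← Finset.mul_sum, Finset.sum_sub_distrib, Finset.sum_sub_distrib] at hsum
  simp only [dotProduct] at hnorm
  simp only [Int.modEq_iff_dvd] at hsum hnorm ⊢
  omega

/-- Sets of size `1 mod 4` in a set of at most `5` elements are singletons or everything, and the
whole set meets any other member oddly. -/
theorem exists_perm_forall_eq_singleton [DecidableEq ι] (hι : Fintype.card ι ≤ 5)
    (T : ι → Finset ι) (hcard : ∀ i, (T i).card % 4 = 1)
    (hinter : Pairwise fun i j => Even (T i ∩ T j).card) :
    ∃ σ : Equiv.Perm ι, ∀ i, T i = {σ i} := by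
  have hodd : ∀ i, Odd (T i).card := fun i => Nat.odd_iff.2 (by have := hcard i; omega)
  have hsingle : ∀ i, ∃ k, T i = {k} := by
    intro i
    rw [← Finset.card_eq_one]
    by_contra hne
    have hle := Finset.card_le_univ (T i)
    have huniv : T i = Finset.univ := by
      rw [← Finset.card_eq_iff_eq_univ]
      have := hcard i
      omega
    obtain ⟨j, hj⟩ : ∃ j, j ≠ i := Fintype.exists_ne_of_one_lt_card (by have := hcard i; omega) i
    have hji : Even (T j ∩ T i).card := hinter hj
    rw [huniv, Finset.inter_univ] at hji
    exact Nat.not_even_iff_odd.2 (hodd j) hji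
  choose p hp using hsingle
  have hinj : Function.Injective p := by
    intro i j hij
    by_contra hne
    have := hinter hne
    simp [hp, hij] at this
  exact ⟨Equiv.ofBijective p (Finite.injective_iff_bijective.1 hinj), hp⟩

theorem exists_perm_modEq_single [DecidableEq ι] (hι : Fintype.card ι ≤ 5) {y : ι → ι → ℤ}
    (hnorm : ∀ i, y i ⬝ᵥ y i ≡ 1 [ZMOD 4]) (horth : Pairwise fun i j => Even (y i ⬝ᵥ y j)) :
    ∃ (σ : Equiv.Perm ι) (s : ι → ℤˣ), ∀ i,
      (∀ k, y i k ≡ (Pi.single (σ i) (s i : ℤ) : ι → ℤ) k [ZMOD 2]) ∧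
        ∑ k, y i k ≡ s i [ZMOD 4] := by
  have hcard : ∀ i, (oddSupport (y i)).card % 4 = 1 := fun i => by
    exact_mod_cast (dotProduct_self_modEq_card_oddSupport (y i)).symm.trans (hnorm i)
  have hinter : Pairwise fun i j => Even (oddSupport (y i) ∩ oddSupport (y j)).card := by
    intro i j hij
    have hmod := dotProduct_modEq_card_inter_oddSupport (y i) (y j)
    rw [← Int.even_coe_nat, Int.even_iff]
    exact hmod.symm.eq.trans (Int.even_iff.1 (horth hij))
  obtain ⟨σ, hσ⟩ := exists_perm_forall_eq_singleton hι _ hcard hinter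
  choose s hs using fun i =>
    exists_unit_modEq_four_of_odd (odd_sum_of_oddSupport_eq_singleton (hσ i))
  refine ⟨σ, s, fun i => ⟨fun k => ?_, hs i⟩⟩
  have hk : Odd (y i k) ↔ k = σ i := by rw [← mem_oddSupport, hσ, Finset.mem_singleton]
  by_cases hki : k = σ i
  · rw [hki, Pi.single_eq_same, ← hki]
    exact (Int.odd_iff.1 (hk.2 hki)).trans (Int.odd_iff.1 (odd_coe_units (s i))).symm
  · rw [Pi.single_eq_of_ne hki]
    exact Int.even_iff.1 (Int.not_odd_iff_even.1 (mt hk.1 hki))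

end Parity

section SignedPermutation

variable {ι : Type*} [DecidableEq ι]

/-- The signed permutation matrix sending the basis vector `eᵢ` to `s i • e_{σ i}`. -/
def signedPerm (σ : Equiv.Perm ι) (s : ι → ℤˣ) : Matrix ι ι ℤ :=
  Matrix.of fun k i => if k = σ i then (s i : ℤ) else 0

variable [Fintype ι] (σ : Equiv.Perm ι) (s : ι → ℤˣ)

theorem signedPerm_mulVec_apply (v : ι → ℤ) (i : ι) :
    (signedPerm σ s *ᵥ v) (σ i) = s i * v i := by
  simp [signedPerm, mulVec, dotProduct]

theorem transpose_signedPerm_mul_self : (signedPerm σ s)ᵀ * signedPerm σ s = 1 := by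
  ext i j
  simp only [signedPerm, mul_apply, transpose_apply, of_apply, mul_ite, ite_mul, zero_mul,
    mul_zero, Finset.sum_ite_eq', Finset.mem_univ, if_true, one_apply]
  split_ifs <;> simp_all

theorem sum_signedPerm_apply (j : ι) : ∑ k, signedPerm σ s k j = s j := by
  simp [signedPerm]

end SignedPermutation

section Coordinates

variable (h : ℕ) [NeZero h]

/-- The matrix `M` whose columns `e₀ + eⱼ` form a basis of the root lattice `D_h`, the lattice of
integer vectors with even coordinate sum; its Gram matrix is `A_h / 2`. -/
def rootMat : Matrix (Fin h) (Fin h) ℤ := 1 + vecMulVec (Pi.single 0 1) 1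

/-- The matrix `2 (Mᵀ)⁻¹`, taking a representative `x` of a class in `ℤ^h / A_h ℤ^h` to twice the
orthonormal coordinates of the corresponding vector of the dual lattice of `D_h`. -/
def coordMat : Matrix (Fin h) (Fin h) ℤ := 2 - vecMulVec 1 (Pi.single 0 1)

theorem transpose_rootMat : (rootMat h)ᵀ = 1 + vecMulVec 1 (Pi.single 0 1) := by
  rw [rootMat, transpose_add, transpose_one, transpose_vecMulVec]

theorem transpose_rootMat_mul_coordMat : (rootMat h)ᵀ * coordMat h = 2 := by
  simp only [transpose_rootMat, coordMat, add_mul, mul_sub, vecMulVec_mul_vecMulVec, one_mul]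
  simp [mul_two]

theorem coordMat_mul_transpose_rootMat : coordMat h * (rootMat h)ᵀ = 2 := by
  simp only [transpose_rootMat, coordMat, mul_add, sub_mul, vecMulVec_mul_vecMulVec, mul_one]
  simp [two_mul]

theorem rootMat_mul_transpose_coordMat : rootMat h * (coordMat h)ᵀ = 2 := by
  simpa using congrArg transpose (coordMat_mul_transpose_rootMat h)

theorem det_rootMat_ne_zero : (rootMat h).det ≠ 0 := by
  refine left_ne_zero_of_mul (b := (coordMat h)ᵀ.det) ?_
  rw [← det_mul, rootMat_mul_transpose_coordMat, ← diagonal_ofNat, det_diagonal]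
  simp

theorem transpose_rootMat_mul_rootMat_apply (i j : Fin h) :
    ((rootMat h)ᵀ * rootMat h) i j =
      (if i = j then 1 else 0) + (if i = 0 then 1 else 0) + (if j = 0 then 1 else 0) + 1 := by
  rw [transpose_rootMat, rootMat]
  simp only [add_mul, mul_add, vecMulVec_mul_vecMulVec, one_mul, mul_one]
  simp only [one_vecMulVec, vecMulVec_one, dotProduct_single, Pi.single_eq_same, mul_one, one_smul,
    Matrix.add_apply, one_apply, replicateRow_apply, Pi.single_apply, replicateCol_apply,
    Pi.one_apply]
  ring

theorem Amat_eq_two_smul : Amat h = (2 : ℤ) • ((rootMat h)ᵀ * rootMat h) := by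
  ext i j
  rw [Matrix.smul_apply, transpose_rootMat_mul_rootMat_apply]
  simp only [Amat, Qmat, Matrix.add_apply, transpose_apply, of_apply, Fin.val_eq_zero_iff,
    smul_eq_mul]
  grind

theorem Amat_mul_transpose_coordMat_mul_coordMat :
    Amat h * ((coordMat h)ᵀ * coordMat h) = 8 := by
  calc Amat h * ((coordMat h)ᵀ * coordMat h)
      = (2 : ℤ) • ((rootMat h)ᵀ * (rootMat h * (coordMat h)ᵀ) * coordMat h) := by
        rw [Amat_eq_two_smul, smul_mul]
        simp only [Matrix.mul_assoc]
    _ = 8 := by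
        rw [rootMat_mul_transpose_coordMat, mul_two, add_mul, transpose_rootMat_mul_coordMat]
        norm_num

variable {h}

theorem coordMat_mulVec_apply (x : Fin h → ℤ) (i : Fin h) :
    (coordMat h *ᵥ x) i = 2 * x i - x 0 := by
  rw [coordMat, sub_mulVec, vecMulVec_mulVec, ofNat_mulVec]
  simp

theorem coordMat_mulVec_transpose_rootMat_mulVec (v : Fin h → ℤ) :
    coordMat h *ᵥ ((rootMat h)ᵀ *ᵥ v) = (2 : ℤ) • v := by
  rw [mulVec_mulVec, coordMat_mul_transpose_rootMat, ofNat_mulVec]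

theorem coordMat_mulVec_injective : Function.Injective (coordMat h *ᵥ ·) := by
  intro x y hxy
  have h2 := congrArg ((rootMat h)ᵀ *ᵥ ·) hxy
  simp only [mulVec_mulVec, transpose_rootMat_mul_coordMat, ofNat_mulVec] at h2
  exact smul_right_injective _ two_ne_zero h2

theorem rootMat_mulVec (v : Fin h → ℤ) :
    rootMat h *ᵥ v = v + Pi.single 0 (∑ k, v k) := by
  rw [rootMat, add_mulVec, vecMulVec_mulVec]
  simp [← Pi.single_smul, one_dotProduct]

theorem sum_rootMat_mulVec (v : Fin h → ℤ) : ∑ k, (rootMat h *ᵥ v) k = 2 * ∑ k, v k := by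
  simp [rootMat_mulVec, Finset.sum_add_distrib, two_mul]

theorem exists_rootMat_mulVec_eq {w : Fin h → ℤ} (hw : Even (∑ k, w k)) :
    ∃ v, rootMat h *ᵥ v = w := by
  obtain ⟨r, hr⟩ := hw
  refine ⟨w - Pi.single 0 r, ?_⟩
  simp [rootMat_mulVec, hr]

end Coordinates

section BoundaryForms

theorem addCircle_coe_div_eq_iff {n : ℤ} (hn : n ≠ 0) (a b : ℤ) :
    ((a / n : ℚ) : AddCircle (1 : ℚ)) = ((b / n : ℚ) : AddCircle (1 : ℚ)) ↔ a ≡ b [ZMOD n] := by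
  refine (AddCommGroup.modEq_iff_eq_mod_zmultiples (p := (1 : ℚ))).symm.trans ?_
  rw [AddCommGroup.div_modEq_div (Int.cast_ne_zero.2 hn), one_mul,
    AddCommGroup.intCast_modEq_intCast, AddCommGroup.modEq_iff_intModEq]

variable {h : ℕ}

theorem ratVec_dotProduct_map_mulVec (B : Matrix (Fin h) (Fin h) ℤ) (x y : Fin h → ℤ) :
    ratVec x ⬝ᵥ (B.map Int.cast *ᵥ ratVec y) = ((x ⬝ᵥ (B *ᵥ y) : ℤ) : ℚ) := by
  simp [ratVec, dotProduct, mulVec]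

variable [NeZero h]

theorem AmatQ_mul_smul_transpose_coordMat_mul_coordMat :
    AmatQ h * ((8⁻¹ : ℚ) • ((coordMat h)ᵀ * coordMat h).map Int.cast) = 1 := by
  have hmap : AmatQ h * ((coordMat h)ᵀ * coordMat h).map Int.cast = 8 := by
    rw [AmatQ, ← Matrix.map_mul_intCast, Amat_mul_transpose_coordMat_mul_coordMat]
    exact map_ofNat (Int.castRingHom ℚ).mapMatrix 8
  rw [Matrix.mul_smul, hmap]
  ext i j
  simp [ofNat_apply, one_apply]

theorem isUnit_det_AmatQ : IsUnit (AmatQ h).det :=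
  IsUnit.of_mul_eq_one _ <| by
    rw [← det_mul, AmatQ_mul_smul_transpose_coordMat_mul_coordMat, det_one]

theorem inv_AmatQ :
    (AmatQ h)⁻¹ = (8⁻¹ : ℚ) • ((coordMat h)ᵀ * coordMat h).map Int.cast :=
  inv_eq_right_inv AmatQ_mul_smul_transpose_coordMat_mul_coordMat

theorem ratVec_dotProduct_inv_AmatQ_mulVec (x y : Fin h → ℤ) :
    ratVec x ⬝ᵥ ((AmatQ h)⁻¹ *ᵥ ratVec y) =
      ((coordMat h *ᵥ x ⬝ᵥ coordMat h *ᵥ y : ℤ) : ℚ) / 8 := by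
  rw [inv_AmatQ, smul_mulVec, dotProduct_smul, ratVec_dotProduct_map_mulVec, ← mulVec_mulVec,
    dotProduct_mulVec x, vecMul_transpose, smul_eq_mul, inv_mul_eq_div]

theorem linkR_eq (x y : Fin h → ℤ) :
    linkR h x y =
      (((coordMat h *ᵥ x ⬝ᵥ coordMat h *ᵥ y : ℤ) / (8 : ℤ) : ℚ) : AddCircle (1 : ℚ)) := by
  rw [linkR, ratVec_dotProduct_inv_AmatQ_mulVec, Int.cast_ofNat]

/-- Since `A = Q + Qᵀ`, the vector `w = A⁻¹x` satisfies `2 wᵀQw = wᵀAw = xᵀA⁻¹x`. -/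
theorem dotProduct_inv_mul_QmatQ_mul_inv_mulVec (r : Fin h → ℚ) :
    r ⬝ᵥ (((AmatQ h)⁻¹ * QmatQ h * (AmatQ h)⁻¹) *ᵥ r) = (r ⬝ᵥ ((AmatQ h)⁻¹ *ᵥ r)) / 2 := by
  have hA : AmatQ h = QmatQ h + (QmatQ h)ᵀ := by ext i j; simp [AmatQ, QmatQ, Amat]
  have hsymm : (AmatQ h)⁻¹ᵀ = (AmatQ h)⁻¹ := by
    rw [transpose_nonsing_inv, hA, transpose_add, transpose_transpose, add_comm]
  set w := (AmatQ h)⁻¹ *ᵥ r with hw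
  have hleft : ∀ u, r ⬝ᵥ ((AmatQ h)⁻¹ *ᵥ u) = w ⬝ᵥ u := fun u => by
    rw [dotProduct_mulVec, ← mulVec_transpose, hsymm]
  have hAw : AmatQ h *ᵥ w = r := by
    rw [hw, mulVec_mulVec, mul_nonsing_inv _ isUnit_det_AmatQ, one_mulVec]
  have hQ : w ⬝ᵥ ((QmatQ h)ᵀ *ᵥ w) = w ⬝ᵥ (QmatQ h *ᵥ w) := by
    rw [mulVec_transpose, dotProduct_comm, ← dotProduct_mulVec]
  have hsum : w ⬝ᵥ r = 2 * (w ⬝ᵥ (QmatQ h *ᵥ w)) := by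
    conv_lhs => rw [← hAw, hA, add_mulVec, dotProduct_add, hQ, ← two_mul]
  rw [← mulVec_mulVec, ← mulVec_mulVec, hleft, ← hw, dotProduct_comm r w, hsum]
  ring

theorem quadR_eq (x : Fin h → ℤ) :
    quadR h x =
      (((coordMat h *ᵥ x ⬝ᵥ coordMat h *ᵥ x : ℤ) / (16 : ℤ) : ℚ) : AddCircle (1 : ℚ)) := by
  rw [quadR, dotProduct_inv_mul_QmatQ_mul_inv_mulVec, ratVec_dotProduct_inv_AmatQ_mulVec,
    div_div, Int.cast_ofNat]
  norm_num

theorem quadR_add (x y : Fin h → ℤ) :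
    quadR h (x + y) = quadR h x + quadR h y + linkR h x y := by
  simp only [quadR_eq, linkR_eq, ← AddCircle.coe_add, mulVec_add, dotProduct_add, add_dotProduct]
  rw [dotProduct_comm (coordMat h *ᵥ y) (coordMat h *ᵥ x)]
  congr 1
  push_cast
  ring

theorem linkR_eq_linkR_iff (x y x' y' : Fin h → ℤ) :
    linkR h x' y' = linkR h x y ↔
      coordMat h *ᵥ x' ⬝ᵥ coordMat h *ᵥ y' ≡ coordMat h *ᵥ x ⬝ᵥ coordMat h *ᵥ y [ZMOD 8] := by
  rw [linkR_eq, linkR_eq, addCircle_coe_div_eq_iff (by norm_num)]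

theorem quadR_eq_quadR_iff (x x' : Fin h → ℤ) :
    quadR h x' = quadR h x ↔
      coordMat h *ᵥ x' ⬝ᵥ coordMat h *ᵥ x' ≡ coordMat h *ᵥ x ⬝ᵥ coordMat h *ᵥ x [ZMOD 16] := by
  rw [quadR_eq, quadR_eq, addCircle_coe_div_eq_iff (by norm_num)]

end BoundaryForms

section Cokernel

variable {h : ℕ}

theorem ckMk_surjective : Function.Surjective (ckMk : (Fin h → ℤ) → Coker h) :=
  Submodule.Quotient.mk_surjective _

theorem ckMk_add (x y : Fin h → ℤ) : ckMk (x + y) = ckMk x + ckMk y :=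
  rfl

variable [NeZero h]

theorem coordMat_mul_Amat : coordMat h * Amat h = (4 : ℤ) • rootMat h := by
  rw [Amat_eq_two_smul, Matrix.mul_smul, ← Matrix.mul_assoc, coordMat_mul_transpose_rootMat]
  ext i j
  simp only [two_mul, Matrix.smul_apply, Matrix.add_apply, Int.zsmul_eq_mul]
  ring

/-- Coordinate vectors of representatives of `0` are exactly the vectors of `4 D_h`. -/
theorem ckMk_eq_of_coordMat_mulVec_modEq {x y : Fin h → ℤ}
    (hcoord : ∀ k, (coordMat h *ᵥ x) k ≡ (coordMat h *ᵥ y) k [ZMOD 4])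
    (hsum : ∑ k, (coordMat h *ᵥ x) k ≡ ∑ k, (coordMat h *ᵥ y) k [ZMOD 8]) :
    ckMk x = ckMk y := by
  choose w hw using fun k => (hcoord k).symm.dvd
  have hw_even : Even (∑ k, w k) := by
    have h8 := hsum.symm.dvd
    rw [← Finset.sum_sub_distrib, Finset.sum_congr rfl fun k _ => hw k, ← Finset.mul_sum] at h8
    exact even_iff_two_dvd.2 (by omega)
  obtain ⟨v, hv⟩ := exists_rootMat_mulVec_eq hw_even
  refine (Submodule.Quotient.eq _).2 ⟨v, coordMat_mulVec_injective ?_⟩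
  ext k
  simp only [mulVecLin_apply, mulVec_mulVec, coordMat_mul_Amat, smul_mulVec, hv, mulVec_sub,
    Pi.smul_apply, Pi.sub_apply, smul_eq_mul, hw]

end Cokernel

section Isometries

variable {h : ℕ} [NeZero h]

theorem mul_transpose_rootMat_injective :
    Function.Injective fun B : Matrix (Fin h) (Fin h) ℤ => B * (rootMat h)ᵀ := by
  intro B C hBC
  have h2 := congrArg (· * coordMat h) hBC
  simp only [Matrix.mul_assoc, transpose_rootMat_mul_coordMat, mul_two, ← two_zsmul] at h2
  exact smul_right_injective _ (two_ne_zero : (2 : ℤ) ≠ 0) h2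

theorem even_sum_mulVec {ι : Type*} [Fintype ι] {S : Matrix ι ι ℤ}
    (hS : ∀ j, Odd (∑ k, S k j)) {w : ι → ℤ} (hw : Even (∑ k, w k)) :
    Even (∑ k, (S *ᵥ w) k) := by
  have hsum : ∑ k, (S *ᵥ w) k = ∑ j, (∑ k, S k j) * w j := by
    simp only [mulVec, dotProduct, Finset.sum_mul]
    exact Finset.sum_comm
  have hmod : ∑ k, (S *ᵥ w) k ≡ ∑ k, w k [ZMOD 2] := by
    rw [hsum]
    refine Int.ModEq.sum fun j _ => ?_
    simpa using (show ∑ k, S k j ≡ 1 [ZMOD 2] from Int.odd_iff.1 (hS j)).mul_right (w j)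
  exact Int.even_iff.2 (hmod.eq.trans (Int.even_iff.1 hw))

theorem exists_rootMat_mul_eq_mul_rootMat {S : Matrix (Fin h) (Fin h) ℤ}
    (hS : ∀ j, Odd (∑ k, S k j)) : ∃ P, rootMat h * P = S * rootMat h := by
  have hcol : ∀ j, ∃ v, rootMat h *ᵥ v = S *ᵥ (rootMat h *ᵥ Pi.single j 1) := fun j =>
    exists_rootMat_mulVec_eq <| even_sum_mulVec hS <| by
      rw [sum_rootMat_mulVec]
      exact even_two_mul _
  choose v hv using hcol
  refine ⟨(Matrix.of v)ᵀ, ext_of_mulVec_single fun j => ?_⟩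
  rw [← mulVec_mulVec, ← mulVec_mulVec, ← hv]
  simp

/-- Odd column sums make `S` preserve `D_h`, and `P` is then its matrix in the basis `M`. -/
theorem exists_isometry_of_orthogonal {S : Matrix (Fin h) (Fin h) ℤ} (hS : Sᵀ * S = 1)
    (hodd : ∀ j, Odd (∑ k, S k j)) :
    ∃ P : Matrix (Fin h) (Fin h) ℤ, IsUnit P.det ∧ Pᵀ * Amat h * P = Amat h ∧
      coordMat h * (Pᵀ)⁻¹ = S * coordMat h := by
  obtain ⟨P, hP⟩ := exists_rootMat_mul_eq_mul_rootMat hodd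
  have hcoord : S * coordMat h * Pᵀ = coordMat h := by
    apply mul_transpose_rootMat_injective
    calc S * coordMat h * Pᵀ * (rootMat h)ᵀ
        = S * coordMat h * (rootMat h * P)ᵀ := by rw [transpose_mul, Matrix.mul_assoc]
      _ = S * (coordMat h * (rootMat h)ᵀ) * Sᵀ := by
          simp only [hP, transpose_mul, Matrix.mul_assoc]
      _ = coordMat h * (rootMat h)ᵀ := by
          rw [coordMat_mul_transpose_rootMat, mul_two, add_mul, mul_eq_one_comm.1 hS,
            one_add_one_eq_two]
  have hPunit : IsUnit P.det := by
    have hdet := congrArg det hP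
    rw [det_mul, det_mul, mul_comm] at hdet
    rw [mul_right_cancel₀ (det_rootMat_ne_zero h) hdet]
    exact IsUnit.of_mul_eq_one Sᵀ.det (by rw [mul_comm, ← det_mul, hS, det_one])
  refine ⟨P, hPunit, ?_, ?_⟩
  · have hgram : Pᵀ * ((rootMat h)ᵀ * rootMat h) * P = (rootMat h)ᵀ * rootMat h := by
      calc Pᵀ * ((rootMat h)ᵀ * rootMat h) * P
          = (rootMat h * P)ᵀ * (rootMat h * P) := by
            simp only [transpose_mul, Matrix.mul_assoc]
        _ = (rootMat h)ᵀ * (Sᵀ * S) * rootMat h := by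
            simp only [hP, transpose_mul, Matrix.mul_assoc]
        _ = (rootMat h)ᵀ * rootMat h := by rw [hS, Matrix.mul_one]
    rw [Amat_eq_two_smul, Matrix.mul_smul, Matrix.smul_mul, hgram]
  · rw [← hcoord, mul_nonsing_inv_cancel_right _ _ (by rwa [det_transpose]), hcoord]

end Isometries

section Action

variable {h : ℕ} [NeZero h]

theorem linkR_eq_of_quadR_eq {φ : Coker h →+ Coker h}
    (hquad : ∀ x x', ckMk x' = φ (ckMk x) → quadR h x' = quadR h x) {x y x' y' : Fin h → ℤ}
    (hx : ckMk x' = φ (ckMk x)) (hy : ckMk y' = φ (ckMk y)) :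
    linkR h x' y' = linkR h x y := by
  have hadd : quadR h (x' + y') = quadR h (x + y) :=
    hquad _ _ (by rw [ckMk_add, hx, hy, ← map_add, ckMk_add])
  rw [quadR_add, quadR_add, hquad x x' hx, hquad y y' hy] at hadd
  exact add_left_cancel hadd

/-- If `x 0` is odd, so are all coordinates `2 xᵢ - x₀`, and the norm is `h` modulo `8`. -/
theorem exists_coordMat_mulVec_eq_two_smul (h4 : h % 8 ≠ 4) {x : Fin h → ℤ}
    (hx : coordMat h *ᵥ x ⬝ᵥ coordMat h *ᵥ x ≡ 4 [ZMOD 16]) :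
    ∃ y : Fin h → ℤ, coordMat h *ᵥ x = (2 : ℤ) • y := by
  have hx0 : Even (x 0) := by
    by_contra hodd
    have hcoord : ∀ k, Odd ((coordMat h *ᵥ x) k) := fun k => by
      rw [coordMat_mulVec_apply]
      exact (even_two_mul _).sub_odd (Int.not_even_iff_odd.1 hodd)
    have h8 := dotProduct_self_modEq_card_of_odd hcoord
    rw [Fintype.card_fin] at h8
    simp only [Int.ModEq] at hx h8
    omega
  obtain ⟨r, hr⟩ := hx0
  refine ⟨fun k => x k - r, funext fun k => ?_⟩
  rw [coordMat_mulVec_apply, hr, Pi.smul_apply, smul_eq_mul]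
  ring

theorem exists_perm_ckMk_eq_signed_single (hh : h ≤ 5) (h4 : h ≠ 4) {X : Fin h → Fin h → ℤ}
    (hnorm : ∀ i, coordMat h *ᵥ X i ⬝ᵥ coordMat h *ᵥ X i ≡ 4 [ZMOD 16])
    (horth : Pairwise fun i j => coordMat h *ᵥ X i ⬝ᵥ coordMat h *ᵥ X j ≡ 0 [ZMOD 8]) :
    ∃ (σ : Equiv.Perm (Fin h)) (s : Fin h → ℤˣ),
      ∀ i, ckMk (X i) = ckMk ((rootMat h)ᵀ *ᵥ Pi.single (σ i) (s i : ℤ)) := by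
  choose y hy using fun i => exists_coordMat_mulVec_eq_two_smul (by omega) (hnorm i)
  have hdot : ∀ i j, coordMat h *ᵥ X i ⬝ᵥ coordMat h *ᵥ X j = 4 * (y i ⬝ᵥ y j) := by
    intro i j
    rw [hy, hy, smul_dotProduct, dotProduct_smul, smul_eq_mul, smul_eq_mul]
    ring
  simp only [hdot, Int.modEq_iff_dvd] at hnorm horth
  obtain ⟨σ, s, hσ⟩ := exists_perm_modEq_single (y := y) (by simpa using hh)
    (fun i => Int.modEq_iff_dvd.2 (by have := hnorm i; omega))
    (fun i j hij => even_iff_two_dvd.2 (by have : (8 : ℤ) ∣ _ := horth hij; omega))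
  refine ⟨σ, s, fun i => ckMk_eq_of_coordMat_mulVec_modEq (fun k => ?_) ?_⟩
  · rw [hy, coordMat_mulVec_transpose_rootMat_mulVec]
    exact ((hσ i).1 k).mul_left' (c := 2)
  · rw [hy, coordMat_mulVec_transpose_rootMat_mulVec]
    simpa [← Finset.mul_sum] using (hσ i).2.mul_left' (c := 2)

theorem map_ckMk_eq_of_odd {φ : Coker h →+ Coker h}
    (hquad : ∀ x x', ckMk x' = φ (ckMk x) → quadR h x' = quadR h x)
    {σ : Equiv.Perm (Fin h)} {s : Fin h → ℤˣ}
    (hbasis : ∀ i, ckMk ((rootMat h)ᵀ *ᵥ Pi.single (σ i) (s i : ℤ)) =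
      φ (ckMk ((rootMat h)ᵀ *ᵥ Pi.single i 1)))
    {x x' : Fin h → ℤ} (hodd : Odd (x 0))
    (hx' : coordMat h *ᵥ x' = signedPerm σ s *ᵥ (coordMat h *ᵥ x)) :
    φ (ckMk x) = ckMk x' := by
  obtain ⟨y, hy⟩ := ckMk_surjective (φ (ckMk x))
  have hx'_odd : ∀ k, Odd ((coordMat h *ᵥ x') k) := by
    intro k
    obtain ⟨i, rfl⟩ := σ.surjective k
    rw [hx', signedPerm_mulVec_apply, coordMat_mulVec_apply]
    exact (odd_coe_units (s i)).mul ((even_two_mul _).sub_odd hodd)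
  have hcoord : ∀ k, (coordMat h *ᵥ y) k ≡ (coordMat h *ᵥ x') k [ZMOD 4] := by
    intro k
    obtain ⟨i, rfl⟩ := σ.surjective k
    have hlink := (linkR_eq_linkR_iff _ _ _ _).1 (linkR_eq_of_quadR_eq hquad hy (hbasis i))
    simp only [coordMat_mulVec_transpose_rootMat_mulVec, dotProduct_smul, dotProduct_single,
      smul_eq_mul, mul_one] at hlink
    rw [hx', signedPerm_mulVec_apply]
    rcases Int.units_eq_one_or (s i) with hs | hs <;>
      simp only [hs, Units.val_one, Units.val_neg, Int.modEq_iff_dvd] at hlink ⊢ <;> omega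
  have hnorm : coordMat h *ᵥ y ⬝ᵥ coordMat h *ᵥ y ≡
      coordMat h *ᵥ x' ⬝ᵥ coordMat h *ᵥ x' [ZMOD 16] := by
    have hx'x : coordMat h *ᵥ x' ⬝ᵥ coordMat h *ᵥ x' =
        coordMat h *ᵥ x ⬝ᵥ coordMat h *ᵥ x := by
      rw [hx', dotProduct_mulVec, ← mulVec_transpose, mulVec_mulVec,
        transpose_signedPerm_mul_self, one_mulVec]
    rw [hx'x]
    exact (quadR_eq_quadR_iff _ _).1 (hquad x y hy)
  rw [← hy]
  exact ckMk_eq_of_coordMat_mulVec_modEq hcoord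
    (sum_modEq_eight_of_dotProduct_self_modEq hx'_odd hcoord hnorm)

theorem exists_perm_ckMk_signed_single_eq_map (hh : h ≤ 5) (h4 : h ≠ 4) {φ : Coker h →+ Coker h}
    (hquad : ∀ x x', ckMk x' = φ (ckMk x) → quadR h x' = quadR h x) :
    ∃ (σ : Equiv.Perm (Fin h)) (s : Fin h → ℤˣ),
      ∀ i, ckMk ((rootMat h)ᵀ *ᵥ Pi.single (σ i) (s i : ℤ)) =
        φ (ckMk ((rootMat h)ᵀ *ᵥ Pi.single i 1)) := by
  choose X hX using fun i : Fin h => ckMk_surjective (φ (ckMk ((rootMat h)ᵀ *ᵥ Pi.single i 1)))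
  have hnorm : ∀ i, coordMat h *ᵥ X i ⬝ᵥ coordMat h *ᵥ X i ≡ 4 [ZMOD 16] := by
    intro i
    have hquad_i := (quadR_eq_quadR_iff _ _).1 (hquad _ _ (hX i))
    rw [coordMat_mulVec_transpose_rootMat_mulVec, smul_dotProduct, dotProduct_smul] at hquad_i
    simpa using hquad_i
  have horth : Pairwise fun i j => coordMat h *ᵥ X i ⬝ᵥ coordMat h *ᵥ X j ≡ 0 [ZMOD 8] := by
    intro i j hij
    have hlink_ij := (linkR_eq_linkR_iff _ _ _ _).1 (linkR_eq_of_quadR_eq hquad (hX i) (hX j))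
    rw [coordMat_mulVec_transpose_rootMat_mulVec, coordMat_mulVec_transpose_rootMat_mulVec,
      smul_dotProduct, dotProduct_smul] at hlink_ij
    simpa [hij] using hlink_ij
  obtain ⟨σ, s, hσ⟩ := exists_perm_ckMk_eq_signed_single hh h4 hnorm horth
  exact ⟨σ, s, fun i => (hσ i).symm.trans (hX i)⟩

end Action

theorem boundary_map_surjective_h5_general {h : ℕ} [NeZero h] (hh : h ≤ 5) (h4 : h ≠ 4)
    (φ : Coker h →+ Coker h)
    (hquad : ∀ x x' : Fin h → ℤ, ckMk x' = φ (ckMk x) → quadR h x' = quadR h x) :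
    ∃ P : Matrix (Fin h) (Fin h) ℤ, IsUnit P.det ∧ Pᵀ * Amat h * P = Amat h ∧
      ∀ x : Fin h → ℤ, φ (ckMk x) = ckMk ((Pᵀ)⁻¹ *ᵥ x) := by
  obtain ⟨σ, s, hbasis⟩ := exists_perm_ckMk_signed_single_eq_map hh h4 hquad
  obtain ⟨P, hPunit, hPA, hcoord⟩ := exists_isometry_of_orthogonal
    (transpose_signedPerm_mul_self σ s)
    fun j => by rw [sum_signedPerm_apply]; exact odd_coe_units (s j)
  have hφ_odd : ∀ x : Fin h → ℤ, Odd (x 0) → φ (ckMk x) = ckMk ((Pᵀ)⁻¹ *ᵥ x) :=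
    fun x hx => map_ckMk_eq_of_odd hquad hbasis hx (by rw [mulVec_mulVec, hcoord, mulVec_mulVec])
  refine ⟨P, hPunit, hPA, fun x => ?_⟩
  rcases Int.even_or_odd (x 0) with hx | hx
  · have hadd : φ (ckMk x) + φ (ckMk 1) = ckMk ((Pᵀ)⁻¹ *ᵥ x) + φ (ckMk 1) := by
      rw [← map_add, ← ckMk_add, hφ_odd _ (hx.add_odd odd_one), hφ_odd 1 odd_one, ← ckMk_add,
        mulVec_add]
    exact add_right_cancel hadd
  · exact hφ_odd x hx

/-- For h = 5, every group automorphism of ℤ^5/A_5 ℤ^5 preserving the boundary linking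
form ∂λ and the boundary quadratic form ∂θ is induced, via [x] ↦ [(Pᵀ)⁻¹ x], by an isometry
P ∈ GL_5(ℤ) of A_5; i.e. the boundary map ∂ is surjective and bAut(ℤ^5, [Q_5]) is
trivial. -/
theorem boundary_map_surjective_h5 (φ : Coker 5 ≃+ Coker 5)
    (hlink : ∀ x y x' y' : Fin 5 → ℤ, ckMk x' = φ (ckMk x) → ckMk y' = φ (ckMk y) →
      linkR 5 x' y' = linkR 5 x y)
    (hquad : ∀ x x' : Fin 5 → ℤ, ckMk x' = φ (ckMk x) → quadR 5 x' = quadR 5 x) :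
    ∃ P : Matrix (Fin 5) (Fin 5) ℤ, IsUnit P.det ∧ Pᵀ * Amat 5 * P = Amat 5 ∧
      ∀ x : Fin 5 → ℤ, φ (ckMk x) = ckMk ((Pᵀ)⁻¹ *ᵥ x) := by
  exact boundary_map_surjective_h5_general (by norm_num) (by norm_num) φ.toAddMonoidHom hquad
end
end

section
/- For h = 7, the image of the boundary map ∂ is a subgroup of index 8 in the group of all group automorphisms φ of ℤ⁷/A₇ℤ⁷ satisfying ∂λ(φ(ξ),φ(η)) = ∂λ(ξ,η) and ∂θ(φ(ξ)) = ∂θ(ξ) for all ξ, η; in particular ∂ is not surjective, so there exists an automorphism of the boundary forms that is not of the form [x] ↦ [(P^T)^{-1}x] for any P ∈ GL₇(ℤ) with P^T A₇ P = A₇. -/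
open Matrix

noncomputable section

/-- φ preserves the boundary linking form ∂λ and the boundary quadratic form ∂θ
(stated on integer representatives). -/
def PreservesBoundaryForms (h : ℕ) (φ : Coker h ≃+ Coker h) : Prop :=
  (∀ x y x' y' : Fin h → ℤ, ckMk x' = φ (ckMk x) → ckMk y' = φ (ckMk y) →
    linkR h x' y' = linkR h x y) ∧
  (∀ x x' : Fin h → ℤ, ckMk x' = φ (ckMk x) → quadR h x' = quadR h x)

/-- φ lies in the image of the boundary map ∂, i.e. φ([x]) = [(Pᵀ)⁻¹ x] for some isometry
P ∈ GL_h(ℤ) of A_h. -/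
def InBoundaryImage (h : ℕ) (φ : Coker h ≃+ Coker h) : Prop :=
  ∃ P : Matrix (Fin h) (Fin h) ℤ, IsUnit P.det ∧ Pᵀ * Amat h * P = Amat h ∧
    ∀ x : Fin h → ℤ, φ (ckMk x) = ckMk ((Pᵀ)⁻¹ *ᵥ x)

/-!
`A_h` is twice the Gram matrix of the root lattice `D_h`, so `ℤ^h / A_h ℤ^h` is `D_h* / 2 D_h` with
its discriminant forms. For `h ≠ 4` the vectors of norm `1` in `D_h*` are the `±eᵢ`, and an
automorphism of the boundary forms comes from an isometry if and only if it preserves the set of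
their classes: the signed permutation read off from the images of the `eᵢ` is an isometry of `D_h*`,
and the forms then determine the automorphism.

For `h = 7` the classes on which `∂θ` is `1/4` are labelled by the `28` pairs in an eight-element
set, and labels of `∂λ`-orthogonal classes meet in exactly one point. The labels of the images of
the seven `eᵢ` thus pairwise meet, so they share a point `k` and are all the pairs through `k`.
The eight stars obtained in this way form a single orbit, as the automorphism induced by
`u ↦ u - (u ⬝ᵥ r) • r` with `r = ∑ₖ eₖ - eᵢ` exchanges the points `i` and `7`. Hence the image of
the boundary map is a stabilizer of index `8`.
-/

namespace BoundaryForms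

open scoped Pointwise

lemma addCircle_coe_div_eq_iff {n : ℕ} (hn : n ≠ 0) (a b : ℤ) :
    (((a : ℚ) / n : ℚ) : AddCircle (1 : ℚ)) = ((b : ℚ) / n : ℚ) ↔ (a : ZMod n) = b := by
  have hn' : (n : ℚ) ≠ 0 := by exact_mod_cast hn
  rw [← sub_eq_zero, ← AddCircle.coe_sub, AddCircle.coe_eq_zero_iff, ← sub_div, eq_comm,
    ZMod.intCast_eq_intCast_iff_dvd_sub, dvd_def]
  refine exists_congr fun m => ?_
  rw [zsmul_one, eq_comm, div_eq_iff hn', mul_comm]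
  exact_mod_cast Iff.rfl

section Lattice

lemma ckMk_surjective {h : ℕ} : Function.Surjective (ckMk (h := h)) :=
  Submodule.Quotient.mk_surjective _

lemma ckMk_eq_iff_exists_mulVec {h : ℕ} {x y : Fin h → ℤ} :
    ckMk x = ckMk y ↔ ∃ w, x = y + Amat h *ᵥ w := by
  rw [ckMk, ckMk, Submodule.Quotient.eq, LinearMap.mem_range]
  simp only [mulVecLin_apply, eq_sub_iff_add_eq', eq_comm]

variable {h : ℕ} [NeZero h]

/-- The matrix all of whose rows are `e₀`. -/
def repeatedFirstRow (h : ℕ) [NeZero h] : Matrix (Fin h) (Fin h) ℤ :=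
  replicateRow (Fin h) (Pi.single 0 1)

/-- The rows are the basis `2e₀, e₀ + e₁, …, e₀ + e_{h-1}` of the root lattice `D_h`;
`A_h` is twice its Gram matrix. -/
def latticeBasis (h : ℕ) [NeZero h] : Matrix (Fin h) (Fin h) ℤ := 1 + repeatedFirstRow h

/-- The matrix sending `x ∈ ℤ^h` to `2v`, where `v ∈ D_h*` pairs with the rows of `latticeBasis h`
to the entries of `x`. The factor `2` makes `2v` integral. -/
def dualMatrix (h : ℕ) [NeZero h] : Matrix (Fin h) (Fin h) ℤ := (2 : ℤ) • 1 - repeatedFirstRow h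

lemma repeatedFirstRow_mul_apply (X : Matrix (Fin h) (Fin h) ℤ) (i j : Fin h) :
    (repeatedFirstRow h * X) i j = X 0 j := by
  simp [repeatedFirstRow, Matrix.mul_apply, Pi.single_apply]

lemma mul_repeatedFirstRow_apply (X : Matrix (Fin h) (Fin h) ℤ) (i j : Fin h) :
    (X * repeatedFirstRow h) i j = if j = 0 then ∑ k, X i k else 0 := by
  simp [repeatedFirstRow, Matrix.mul_apply, Pi.single_apply]

lemma repeatedFirstRow_mul_self :
    repeatedFirstRow h * repeatedFirstRow h = repeatedFirstRow h := by
  ext i j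
  rw [repeatedFirstRow_mul_apply]
  rfl

lemma latticeBasis_mul_apply (X : Matrix (Fin h) (Fin h) ℤ) (i j : Fin h) :
    (latticeBasis h * X) i j = X i j + X 0 j := by
  rw [latticeBasis, add_mul, one_mul, Matrix.add_apply, repeatedFirstRow_mul_apply]

lemma repeatedFirstRow_mulVec (x : Fin h → ℤ) : repeatedFirstRow h *ᵥ x = fun _ => x 0 := by
  ext i
  simp [repeatedFirstRow, mulVec, dotProduct, Pi.single_apply]

lemma repeatedFirstRow_transpose_mulVec (w : Fin h → ℤ) :
    (repeatedFirstRow h)ᵀ *ᵥ w = Pi.single 0 (∑ i, w i) := by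
  ext i
  simp [repeatedFirstRow, mulVec, dotProduct, Pi.single_apply]

lemma dualMatrix_mul_latticeBasis : dualMatrix h * latticeBasis h = (2 : ℤ) • 1 := by
  rw [dualMatrix, latticeBasis, sub_mul, mul_add, mul_add, repeatedFirstRow_mul_self]
  simp only [mul_one, smul_mul_assoc, one_mul]
  module

lemma latticeBasis_mul_dualMatrix : latticeBasis h * dualMatrix h = (2 : ℤ) • 1 := by
  rw [dualMatrix, latticeBasis, add_mul, mul_sub, mul_sub, repeatedFirstRow_mul_self]
  simp only [mul_one, mul_smul_comm, one_mul]
  module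

lemma Amat_eq : Amat h = (2 : ℤ) • (latticeBasis h * (latticeBasis h)ᵀ) := by
  ext i j
  have hM : (latticeBasis h * (latticeBasis h)ᵀ) i j =
      (if i = j then 1 else 0) + (if i = 0 then 1 else 0) + (if j = 0 then 1 else 0) + 1 := by
    simp [latticeBasis, repeatedFirstRow, mul_apply, one_apply, Pi.single_apply, mul_add,
      Finset.sum_add_distrib, eq_comm]
    ring
  simp only [Matrix.smul_apply, hM, Amat, Qmat, Matrix.add_apply, transpose_apply, of_apply,
    Fin.val_eq_zero_iff, smul_eq_mul]
  rcases lt_trichotomy i j with hij | rfl | hij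
  · simp only [hij.le, hij.not_ge, hij.ne]
    grind
  · grind
  · simp only [hij.le, hij.not_ge, hij.ne']
    grind

lemma dualMatrix_mul_Amat : dualMatrix h * Amat h = (4 : ℤ) • (latticeBasis h)ᵀ := by
  rw [Amat_eq, mul_smul_comm, ← mul_assoc, dualMatrix_mul_latticeBasis, smul_mul_assoc, one_mul,
    smul_smul]
  norm_num

lemma gramMatrix_mul_Amat : (dualMatrix h)ᵀ * dualMatrix h * Amat h = (8 : ℤ) • 1 := by
  rw [mul_assoc, dualMatrix_mul_Amat, mul_smul_comm, ← transpose_mul, latticeBasis_mul_dualMatrix,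
    transpose_smul, transpose_one, smul_smul]
  norm_num

/-- Twice the element of `D_h*` represented by `x`, in the standard coordinates of `ℚ^h`. -/
def coord (x : Fin h → ℤ) : Fin h → ℤ := dualMatrix h *ᵥ x

/-- Four times the inner product on `D_h*`. -/
def gram (x y : Fin h → ℤ) : ℤ := coord x ⬝ᵥ coord y

lemma coord_apply (x : Fin h → ℤ) (i : Fin h) : coord x i = 2 * x i - x 0 := by
  simp [coord, dualMatrix, sub_mulVec, repeatedFirstRow_mulVec]

lemma coord_injective : Function.Injective (coord (h := h)) := by
  intro x y hxy
  have h2 : (2 : ℤ) • x = (2 : ℤ) • y := by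
    simpa only [coord, mulVec_mulVec, latticeBasis_mul_dualMatrix, smul_mulVec, one_mulVec]
      using congrArg (latticeBasis h *ᵥ ·) hxy
  exact smul_right_injective _ two_ne_zero h2

lemma coord_add (x y : Fin h → ℤ) : coord (x + y) = coord x + coord y := mulVec_add _ _ _

lemma coord_neg (x : Fin h → ℤ) : coord (-x) = -coord x := mulVec_neg _ _

lemma coord_Amat_mulVec (w : Fin h → ℤ) :
    coord (Amat h *ᵥ w) = (4 : ℤ) • ((latticeBasis h)ᵀ *ᵥ w) := by
  rw [coord, mulVec_mulVec, dualMatrix_mul_Amat, smul_mulVec]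

lemma latticeBasis_transpose_mulVec (w : Fin h → ℤ) :
    (latticeBasis h)ᵀ *ᵥ w = w + Pi.single 0 (∑ i, w i) := by
  rw [latticeBasis, transpose_add, add_mulVec, transpose_one, one_mulVec,
    repeatedFirstRow_transpose_mulVec]

lemma ckMk_eq_iff_coord {x y : Fin h → ℤ} :
    ckMk x = ckMk y ↔ ∃ d : Fin h → ℤ, Even (∑ i, d i) ∧ coord x = coord y + (4 : ℤ) • d := by
  rw [ckMk_eq_iff_exists_mulVec]
  constructor
  · rintro ⟨w, rfl⟩
    refine ⟨(latticeBasis h)ᵀ *ᵥ w, ⟨∑ i, w i, ?_⟩, by rw [coord_add, coord_Amat_mulVec]⟩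
    simp [latticeBasis_transpose_mulVec, Finset.sum_add_distrib]
  · rintro ⟨d, ⟨s, hs⟩, hd⟩
    refine ⟨d - Pi.single 0 s, coord_injective ?_⟩
    rw [hd, coord_add, coord_Amat_mulVec, latticeBasis_transpose_mulVec]
    simp [Finset.sum_sub_distrib, hs]

lemma gram_comm (x y : Fin h → ℤ) : gram x y = gram y x := dotProduct_comm _ _

lemma gram_eq_dotProduct (x y : Fin h → ℤ) :
    gram x y = x ⬝ᵥ (((dualMatrix h)ᵀ * dualMatrix h) *ᵥ y) := by
  rw [gram, coord, coord, ← mulVec_mulVec, dotProduct_mulVec x, vecMul_transpose]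

lemma gram_Amat_mulVec (x w : Fin h → ℤ) : gram x (Amat h *ᵥ w) = 8 * (x ⬝ᵥ w) := by
  rw [gram_eq_dotProduct, mulVec_mulVec, gramMatrix_mul_Amat, smul_mulVec, one_mulVec,
    dotProduct_smul, smul_eq_mul]

lemma gram_add_right (x y z : Fin h → ℤ) : gram x (y + z) = gram x y + gram x z := by
  rw [gram, coord_add, dotProduct_add]; rfl

lemma gram_add_Amat_right (x y w : Fin h → ℤ) :
    gram x (y + Amat h *ᵥ w) = gram x y + 8 * (x ⬝ᵥ w) := by
  rw [gram_add_right, gram_Amat_mulVec]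

lemma gram_add_Amat_self (x w : Fin h → ℤ) :
    gram (x + Amat h *ᵥ w) (x + Amat h *ᵥ w) =
      gram x x + 16 * (x ⬝ᵥ w + (latticeBasis h * (latticeBasis h)ᵀ) *ᵥ w ⬝ᵥ w) := by
  rw [gram_add_Amat_right, gram_comm, gram_add_Amat_right, add_dotProduct, Amat_eq, smul_mulVec,
    smul_dotProduct]
  simp only [smul_eq_mul]
  ring

end Lattice

section DiscriminantForms

lemma AmatQ_inv_transpose (h : ℕ) : ((AmatQ h)⁻¹)ᵀ = (AmatQ h)⁻¹ := by
  rw [transpose_nonsing_inv]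
  congr 1
  ext i j
  simp [AmatQ, Amat, add_comm]

variable {h : ℕ} [NeZero h]

/-- The linking form `∂λ`, with values multiplied by `8`. -/
def discrLink : Coker h → Coker h → ZMod 8 :=
  Quotient.lift₂ (fun x y => (gram x y : ZMod 8)) <| by
    intro x y x' y' hx hy
    obtain ⟨v, rfl⟩ := ckMk_eq_iff_exists_mulVec.1 (Quotient.sound hx)
    obtain ⟨w, rfl⟩ := ckMk_eq_iff_exists_mulVec.1 (Quotient.sound hy)
    rw [gram_add_Amat_right, gram_comm, gram_add_Amat_right, gram_comm]
    push_cast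
    rw [show (8 : ZMod 8) = 0 from rfl]
    ring

/-- The quadratic form `∂θ`, with values multiplied by `16`. -/
def discrQuad : Coker h → ZMod 16 :=
  Quotient.lift (fun x => (gram x x : ZMod 16)) <| by
    intro x y hx
    obtain ⟨w, rfl⟩ := ckMk_eq_iff_exists_mulVec.1 (Quotient.sound hx)
    rw [gram_add_Amat_self]
    push_cast
    rw [show (16 : ZMod 16) = 0 from rfl]
    ring

lemma discrLink_ckMk (x y : Fin h → ℤ) : discrLink (ckMk x) (ckMk y) = gram x y := rfl

lemma discrQuad_ckMk (x : Fin h → ℤ) : discrQuad (ckMk x) = gram x x := rfl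

lemma inv_gramMatrix_mul_AmatQ :
    ((1 / 8 : ℚ) • ((dualMatrix h)ᵀ * dualMatrix h).map (Int.castRingHom ℚ)) * AmatQ h = 1 := by
  have h8 := congrArg (fun X => X.map (Int.castRingHom ℚ)) (gramMatrix_mul_Amat (h := h))
  rw [smul_mul_assoc, show AmatQ h = (Amat h).map (Int.castRingHom ℚ) from rfl, ← Matrix.map_mul,
    h8]
  ext i j
  simp only [Matrix.smul_apply, map_apply, one_apply]
  split_ifs <;> simp

lemma AmatQ_inv_mul : (AmatQ h)⁻¹ * AmatQ h = 1 := by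
  rw [inv_eq_left_inv inv_gramMatrix_mul_AmatQ, inv_gramMatrix_mul_AmatQ]

lemma ratVec_dotProduct_AmatQ_inv (x y : Fin h → ℤ) :
    ratVec x ⬝ᵥ (AmatQ h)⁻¹ *ᵥ ratVec y = (gram x y : ℚ) / 8 := by
  have hcast : ratVec x ⬝ᵥ ((dualMatrix h)ᵀ * dualMatrix h).map (Int.castRingHom ℚ) *ᵥ ratVec y =
      gram x y := by
    simp only [gram_eq_dotProduct, dotProduct, mulVec, ratVec, map_apply, eq_intCast]
    push_cast
    rfl
  rw [inv_eq_left_inv inv_gramMatrix_mul_AmatQ, smul_mulVec, dotProduct_smul, hcast, smul_eq_mul]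
  ring

lemma ratVec_dotProduct_AmatQ_inv_mul_QmatQ_mul_inv (x : Fin h → ℤ) :
    ratVec x ⬝ᵥ ((AmatQ h)⁻¹ * QmatQ h * (AmatQ h)⁻¹) *ᵥ ratVec x = (gram x x : ℚ) / 16 := by
  set B := (AmatQ h)⁻¹ with hB
  have hA : AmatQ h = QmatQ h + (QmatQ h)ᵀ := by
    ext i j
    simp [AmatQ, QmatQ, Amat]
  have htranspose : ratVec x ⬝ᵥ (B * (QmatQ h)ᵀ * B) *ᵥ ratVec x =
      ratVec x ⬝ᵥ (B * QmatQ h * B) *ᵥ ratVec x := by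
    have hBQB : B * (QmatQ h)ᵀ * B = (B * QmatQ h * B)ᵀ := by
      simp only [transpose_mul, hB, AmatQ_inv_transpose, mul_assoc]
    rw [hBQB, mulVec_transpose, dotProduct_comm, dotProduct_mulVec]
  have hsum : B * QmatQ h * B + B * (QmatQ h)ᵀ * B = B := by
    rw [← add_mul, ← mul_add, ← hA, AmatQ_inv_mul, one_mul]
  have hdouble := ratVec_dotProduct_AmatQ_inv x x
  rw [← hB, ← hsum, add_mulVec, dotProduct_add, htranspose] at hdouble
  linarith

lemma linkR_eq_iff {x y x' y' : Fin h → ℤ} :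
    linkR h x' y' = linkR h x y ↔
      discrLink (ckMk x') (ckMk y') = discrLink (ckMk x) (ckMk y) := by
  simp only [linkR, ratVec_dotProduct_AmatQ_inv, discrLink_ckMk]
  exact addCircle_coe_div_eq_iff (n := 8) (by simp) _ _

lemma quadR_eq_iff {x x' : Fin h → ℤ} :
    quadR h x' = quadR h x ↔ discrQuad (ckMk x') = discrQuad (ckMk x) := by
  simp only [quadR, ratVec_dotProduct_AmatQ_inv_mul_QmatQ_mul_inv, discrQuad_ckMk]
  exact addCircle_coe_div_eq_iff (n := 16) (by simp) _ _

lemma preservesBoundaryForms_iff {φ : Coker h ≃+ Coker h} :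
    PreservesBoundaryForms h φ ↔
      (∀ c d, discrLink (φ c) (φ d) = discrLink c d) ∧ ∀ c, discrQuad (φ c) = discrQuad c := by
  constructor
  · rintro ⟨hlink, hquad⟩
    refine ⟨fun c d => ?_, fun c => ?_⟩ <;>
    obtain ⟨x, rfl⟩ := ckMk_surjective c <;>
    obtain ⟨x', hx'⟩ := ckMk_surjective (φ (ckMk x))
    · obtain ⟨y, rfl⟩ := ckMk_surjective d
      obtain ⟨y', hy'⟩ := ckMk_surjective (φ (ckMk y))
      rw [← hx', ← hy']
      exact linkR_eq_iff.1 (hlink x y x' y' hx' hy')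
    · rw [← hx']
      exact quadR_eq_iff.1 (hquad x x' hx')
  · rintro ⟨hlink, hquad⟩
    refine ⟨fun x y x' y' hx hy => ?_, fun x x' hx => ?_⟩
    · rw [linkR_eq_iff, hx, hy, hlink]
    · rw [quadR_eq_iff, hx, hquad]

/-- The group of automorphisms of the boundary forms. -/
def boundaryFormGroup (h : ℕ) [NeZero h] : AddSubgroup (AddAut (Coker h)) where
  carrier := {φ | PreservesBoundaryForms h φ}
  zero_mem' := preservesBoundaryForms_iff.2 ⟨fun _ _ => rfl, fun _ => rfl⟩
  add_mem' {φ ψ} hφ hψ := by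
    obtain ⟨hφl, hφq⟩ := preservesBoundaryForms_iff.1 hφ
    obtain ⟨hψl, hψq⟩ := preservesBoundaryForms_iff.1 hψ
    exact preservesBoundaryForms_iff.2
      ⟨fun c d => (hφl _ _).trans (hψl c d), fun c => (hφq _).trans (hψq c)⟩
  neg_mem' {φ} hφ := by
    obtain ⟨hlink, hquad⟩ := preservesBoundaryForms_iff.1 hφ
    refine preservesBoundaryForms_iff.2 ⟨fun c d => (hlink _ _).symm.trans ?_,
      fun c => (hquad _).symm.trans ?_⟩
    · exact congrArg₂ _ (φ.apply_symm_apply c) (φ.apply_symm_apply d)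
    · exact congrArg _ (φ.apply_symm_apply c)

end DiscriminantForms

section Axes

variable {h : ℕ} [NeZero h]

/-- The class of the `i`-th standard basis vector of `ℚ^h`, which is an element of `D_h*`. -/
def axis (i : Fin h) : Coker h := ckMk (latticeBasis h *ᵥ Pi.single i 1)

/-- The classes of the vectors `±eᵢ`. -/
def axisFrame (h : ℕ) [NeZero h] : Set (Coker h) := {c | ∃ i, c = axis i ∨ c = -axis i}

lemma finite_axisFrame : (axisFrame h).Finite := by
  have hunion : axisFrame h = Set.range axis ∪ Set.range fun i => -axis i := by
    ext c
    simp [axisFrame, exists_or, eq_comm]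
  rw [hunion]
  exact (Set.finite_range _).union (Set.finite_range _)

lemma coord_latticeBasis_mulVec (s : Fin h → ℤ) : coord (latticeBasis h *ᵥ s) = (2 : ℤ) • s := by
  rw [coord, mulVec_mulVec, dualMatrix_mul_latticeBasis, smul_mulVec, one_mulVec]

lemma gram_latticeBasis_mulVec (x s : Fin h → ℤ) :
    gram x (latticeBasis h *ᵥ s) = 2 * (coord x ⬝ᵥ s) := by
  rw [gram, coord_latticeBasis_mulVec, dotProduct_smul, smul_eq_mul]

lemma exists_eq_latticeBasis_mulVec {x : Fin h → ℤ} (hx : Even (x 0)) :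
    ∃ s, x = latticeBasis h *ᵥ s := by
  obtain ⟨k, hk⟩ := hx
  refine ⟨fun i => x i - k, ?_⟩
  ext i
  rw [latticeBasis, add_mulVec, one_mulVec, repeatedFirstRow_mulVec, Pi.add_apply]
  lia

lemma discrLink_axis (x : Fin h → ℤ) (i : Fin h) :
    discrLink (ckMk x) (axis i) = 2 * (coord x i : ZMod 8) := by
  rw [axis, discrLink_ckMk, gram_latticeBasis_mulVec, dotProduct_single_one]
  push_cast
  rfl

lemma exists_coord_eq_add_four_smul {x y : Fin h → ℤ}
    (hxy : ∀ i, discrLink (ckMk x) (axis i) = discrLink (ckMk y) (axis i)) :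
    ∃ d : Fin h → ℤ, coord x = coord y + (4 : ℤ) • d := by
  have hdvd : ∀ i, ∃ d, coord x i = coord y i + 4 * d := by
    intro i
    have hi : ((2 * coord x i : ℤ) : ZMod (8 : ℕ)) = (2 * coord y i : ℤ) := by
      simpa only [discrLink_axis, Int.cast_mul, Int.cast_ofNat] using hxy i
    obtain ⟨d, hd⟩ := (ZMod.intCast_eq_intCast_iff_dvd_sub _ _ _).1 hi.symm
    exact ⟨d, by push_cast at hd; lia⟩
  choose d hd using hdvd
  exact ⟨d, funext hd⟩

lemma mem_axisFrame_of_discrLink_eq {c : Coker h} {i : Fin h}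
    (hc : ∀ j, discrLink c (axis j) = if j = i then 4 else 0) : c ∈ axisFrame h := by
  obtain ⟨x, rfl⟩ := ckMk_surjective c
  obtain ⟨d, hd⟩ := exists_coord_eq_add_four_smul (x := x)
    (y := latticeBasis h *ᵥ Pi.single i 1) fun j => by
      rw [hc, discrLink_axis, coord_latticeBasis_mulVec]
      by_cases hji : j = i <;> simp [hji]
      rfl
  refine ⟨i, ?_⟩
  rcases Int.even_or_odd (∑ j, d j) with heven | hodd
  · exact .inl (ckMk_eq_iff_coord.2 ⟨d, heven, hd⟩)
  · refine .inr ((ckMk_eq_iff_coord (y := -(latticeBasis h *ᵥ Pi.single i 1))).2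
      ⟨d + Pi.single i 1, ?_, ?_⟩)
    · simpa [Finset.sum_add_distrib] using hodd.add_odd odd_one
    · rw [hd, coord_neg, coord_latticeBasis_mulVec]
      module

lemma eq_single_or_eq_neg_single_of_dotProduct_self_eq_one {ι : Type*} [Fintype ι] [DecidableEq ι]
    {s : ι → ℤ} (hs : s ⬝ᵥ s = 1) : ∃ i, s = Pi.single i 1 ∨ s = -Pi.single i 1 := by
  obtain ⟨i, hi⟩ : ∃ i, s i ≠ 0 := by
    by_contra! h0
    simp [dotProduct, h0] at hs
  have hsum := Finset.add_sum_erase Finset.univ (fun j => s j * s j) (Finset.mem_univ i)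
  have hrest : 0 ≤ ∑ j ∈ Finset.univ.erase i, s j * s j :=
    Finset.sum_nonneg fun j _ => mul_self_nonneg _
  have hpos : 0 < s i * s i := mul_self_pos.2 hi
  rw [dotProduct] at hs
  have hzero : ∀ j, j ≠ i → s j = 0 := by
    intro j hj
    have h0 := (Finset.sum_eq_zero_iff_of_nonneg fun j _ => mul_self_nonneg (s j)).1
      (show ∑ j ∈ Finset.univ.erase i, s j * s j = 0 by linarith) j (by simp [hj])
    exact mul_self_eq_zero.1 h0
  refine ⟨i, (mul_self_eq_one_iff.1 (show s i * s i = 1 by linarith)).imp ?_ ?_⟩ <;>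
  · intro hsi
    ext j
    by_cases hj : j = i
    · subst hj; simp [hsi]
    · simp [hzero j hj, hj]

lemma mem_axisFrame_iff {c : Coker h} :
    c ∈ axisFrame h ↔ ∃ s, s ⬝ᵥ s = 1 ∧ c = ckMk (latticeBasis h *ᵥ s) := by
  constructor
  · rintro ⟨i, rfl | rfl⟩
    · exact ⟨Pi.single i 1, by simp, rfl⟩
    · exact ⟨-Pi.single i 1, by simp, by rw [mulVec_neg]; rfl⟩
  · rintro ⟨s, hs, rfl⟩
    obtain ⟨i, rfl | rfl⟩ := eq_single_or_eq_neg_single_of_dotProduct_self_eq_one hs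
    · exact ⟨i, .inl rfl⟩
    · exact ⟨i, .inr (by rw [mulVec_neg]; rfl)⟩

lemma odd_coord {x : Fin h → ℤ} (hx : Odd (x 0)) (i : Fin h) : Odd (coord x i) := by
  rw [coord_apply]
  exact (even_two_mul _).sub_odd hx

-- In `D₄*` the vectors `(±1/2, ±1/2, ±1/2, ±1/2)` also have norm `1`.
lemma ckMk_mem_axisFrame_of_gram_self_eq_four (h4 : h ≠ 4) {x : Fin h → ℤ} (hx : gram x x = 4) :
    ckMk x ∈ axisFrame h := by
  rcases Int.even_or_odd (x 0) with heven | hodd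
  · obtain ⟨s, rfl⟩ := exists_eq_latticeBasis_mulVec heven
    refine mem_axisFrame_iff.2 ⟨s, ?_, rfl⟩
    rw [gram_latticeBasis_mulVec, coord_latticeBasis_mulVec, smul_dotProduct, smul_eq_mul] at hx
    lia
  · have hsum : ∑ i, (coord x i ^ 2 - 1) = 4 - (h : ℤ) := by
      rw [← hx]
      simp [gram, dotProduct, pow_two]
    have hdvd : (8 : ℤ) ∣ 4 - h :=
      hsum ▸ Finset.dvd_sum fun i _ => Int.eight_dvd_sq_sub_one_of_odd (odd_coord hodd i)
    have hnonneg : (0 : ℤ) ≤ 4 - h := hsum ▸ Finset.sum_nonneg fun i _ => by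
      have := Int.odd_iff.1 (odd_coord hodd i)
      nlinarith [sq_nonneg (coord x i), Int.one_le_abs (show coord x i ≠ 0 by lia),
        sq_abs (coord x i)]
    lia

lemma ckMk_eq_of_discrLink_axis_eq {x y : Fin h → ℤ} (hy : Odd (y 0))
    (hlink : ∀ i, discrLink (ckMk x) (axis i) = discrLink (ckMk y) (axis i))
    (hquad : discrQuad (ckMk x) = discrQuad (ckMk y)) : ckMk x = ckMk y := by
  obtain ⟨d, hd⟩ := exists_coord_eq_add_four_smul hlink
  refine ckMk_eq_iff_coord.2 ⟨d, ?_, hd⟩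
  have hgram : gram x x = gram y y + 8 * (coord y ⬝ᵥ d) + 16 * (d ⬝ᵥ d) := by
    simp only [gram, hd, add_dotProduct, dotProduct_add, smul_dotProduct, dotProduct_smul,
      dotProduct_comm d, smul_eq_mul]
    ring
  have heven : Even (coord y ⬝ᵥ d) := by
    obtain ⟨k, hk⟩ := (ZMod.intCast_eq_intCast_iff_dvd_sub _ _ 16).1 hquad.symm
    exact ⟨k - d ⬝ᵥ d, by push_cast at hk; lia⟩
  have hsub : Even (∑ i, d i - coord y ⬝ᵥ d) := by
    rw [dotProduct, ← Finset.sum_sub_distrib]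
    refine Finset.even_sum _ fun i _ => ?_
    rw [← one_sub_mul]
    exact (odd_one.sub_odd (odd_coord hy i)).mul_right _
  simpa using hsub.add heven

end Axes

section BoundaryImage

lemma transpose_inv_mulVec_Amat_mulVec {h : ℕ} {P : Matrix (Fin h) (Fin h) ℤ} (hdet : IsUnit P.det)
    (hP : Pᵀ * Amat h * P = Amat h) (w : Fin h → ℤ) :
    (Pᵀ)⁻¹ *ᵥ (Amat h *ᵥ w) = Amat h *ᵥ (P *ᵥ w) := by
  rw [mulVec_mulVec, mulVec_mulVec]
  nth_rw 1 [← hP]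
  rw [mul_assoc, nonsing_inv_mul_cancel_left _ _ (by rwa [det_transpose])]

lemma ckMk_transpose_inv_mulVec_congr {h : ℕ} {P : Matrix (Fin h) (Fin h) ℤ} (hdet : IsUnit P.det)
    (hP : Pᵀ * Amat h * P = Amat h) {x y : Fin h → ℤ} (hxy : ckMk x = ckMk y) :
    ckMk ((Pᵀ)⁻¹ *ᵥ x) = ckMk ((Pᵀ)⁻¹ *ᵥ y) := by
  obtain ⟨w, rfl⟩ := ckMk_eq_iff_exists_mulVec.1 hxy
  exact ckMk_eq_iff_exists_mulVec.2
    ⟨P *ᵥ w, by rw [mulVec_add, transpose_inv_mulVec_Amat_mulVec hdet hP]⟩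

variable {h : ℕ} [NeZero h]

lemma Amat_mul_gramMatrix : Amat h * ((dualMatrix h)ᵀ * dualMatrix h) = (8 : ℤ) • 1 := by
  rw [Amat_eq, smul_mul_assoc, mul_assoc, ← mul_assoc (latticeBasis h)ᵀ, ← transpose_mul,
    dualMatrix_mul_latticeBasis, transpose_smul, transpose_one, smul_mul_assoc, one_mul,
    mul_smul_comm, latticeBasis_mul_dualMatrix, smul_smul, smul_smul]
  norm_num

lemma gram_transpose_inv_mulVec {P : Matrix (Fin h) (Fin h) ℤ} (hdet : IsUnit P.det)
    (hP : Pᵀ * Amat h * P = Amat h) (x y : Fin h → ℤ) :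
    gram ((Pᵀ)⁻¹ *ᵥ x) ((Pᵀ)⁻¹ *ᵥ y) = gram x y := by
  have hcancel (w : Fin h → ℤ) : Pᵀ *ᵥ ((Pᵀ)⁻¹ *ᵥ w) = w := by
    rw [mulVec_mulVec, mul_nonsing_inv _ (by rwa [det_transpose]), one_mulVec]
  set G := (dualMatrix h)ᵀ * dualMatrix h
  have hy : (8 : ℤ) • y = Amat h *ᵥ (G *ᵥ y) := by
    rw [mulVec_mulVec, Amat_mul_gramMatrix, smul_mulVec, one_mulVec]
  have h8 : 8 * gram ((Pᵀ)⁻¹ *ᵥ x) ((Pᵀ)⁻¹ *ᵥ y) = 8 * gram x y := by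
    calc 8 * gram ((Pᵀ)⁻¹ *ᵥ x) ((Pᵀ)⁻¹ *ᵥ y)
        = gram ((Pᵀ)⁻¹ *ᵥ x) ((Pᵀ)⁻¹ *ᵥ ((8 : ℤ) • y)) := by
          simp only [gram, coord, mulVec_smul, dotProduct_smul, smul_eq_mul]
      _ = 8 * (((Pᵀ)⁻¹ *ᵥ x) ⬝ᵥ (P *ᵥ (G *ᵥ y))) := by
          rw [hy, transpose_inv_mulVec_Amat_mulVec hdet hP, gram_Amat_mulVec]
      _ = 8 * gram x y := by
          rw [dotProduct_mulVec, ← mulVec_transpose, hcancel, gram_eq_dotProduct]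
  lia

lemma map_mem_axisFrame_of_inBoundaryImage (h4 : h ≠ 4) {φ : Coker h ≃+ Coker h}
    (hφ : InBoundaryImage h φ) {c : Coker h} (hc : c ∈ axisFrame h) : φ c ∈ axisFrame h := by
  obtain ⟨P, hdet, hP, hφP⟩ := hφ
  obtain ⟨s, hs, rfl⟩ := mem_axisFrame_iff.1 hc
  rw [hφP]
  refine ckMk_mem_axisFrame_of_gram_self_eq_four h4 ?_
  rw [gram_transpose_inv_mulVec hdet hP, gram_latticeBasis_mulVec, coord_latticeBasis_mulVec,
    smul_dotProduct, hs]
  rfl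

lemma dualMatrix_mul_left_injective :
    Function.Injective fun X : Matrix (Fin h) (Fin h) ℤ => dualMatrix h * X := by
  intro X Y hXY
  have h2 : (2 : ℤ) • X = (2 : ℤ) • Y := by
    simpa only [← mul_assoc, latticeBasis_mul_dualMatrix, smul_mul_assoc, one_mul]
      using congrArg (latticeBasis h * ·) hXY
  exact smul_right_injective _ two_ne_zero h2

lemma even_dotProduct_self_sub_sum {ι : Type*} [Fintype ι] (s : ι → ℤ) :
    Even (s ⬝ᵥ s - ∑ i, s i) := by
  rw [dotProduct, ← Finset.sum_sub_distrib]
  refine Finset.even_sum _ fun i _ => ?_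
  rw [← mul_sub_one]
  exact Int.even_mul_pred_self _

lemma odd_sum_row_of_mul_transpose_eq_one {ι : Type*} [Fintype ι] [DecidableEq ι]
    {S : Matrix ι ι ℤ} (hS : S * Sᵀ = 1) (i : ι) : Odd (∑ j, S i j) := by
  have hnorm : S i ⬝ᵥ S i = 1 := by simpa [mul_apply'] using congrFun (congrFun hS i) i
  simpa only [hnorm, sub_sub_cancel] using odd_one.sub_even (even_dotProduct_self_sub_sum (S i))

lemma exists_dualMatrix_mul_eq_mul_dualMatrix {S : Matrix (Fin h) (Fin h) ℤ} (hS : S * Sᵀ = 1) :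
    ∃ N, dualMatrix h * N = S * dualMatrix h := by
  have heven : ∀ i j, ∃ n, (latticeBasis h * S * dualMatrix h) i j = 2 * n := by
    intro i j
    have hrow : Even (∑ k, S i k + ∑ k, S 0 k) :=
      (odd_sum_row_of_mul_transpose_eq_one hS i).add_odd
        (odd_sum_row_of_mul_transpose_eq_one hS 0)
    have hentry : (latticeBasis h * S * dualMatrix h) i j =
        2 * (latticeBasis h * S) i j - if j = 0 then ∑ k, S i k + ∑ k, S 0 k else 0 := by
      simp only [dualMatrix, mul_sub, mul_smul_comm, mul_one, Matrix.sub_apply, Matrix.smul_apply,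
        smul_eq_mul, mul_repeatedFirstRow_apply, latticeBasis_mul_apply, Finset.sum_add_distrib]
    rw [hentry, ← even_iff_exists_two_mul]
    refine (even_two_mul _).sub ?_
    split_ifs
    · exact hrow
    · exact Even.zero
  choose n hn using heven
  refine ⟨of n, smul_right_injective _ (two_ne_zero (α := ℤ)) ?_⟩
  have hN : (2 : ℤ) • of n = latticeBasis h * S * dualMatrix h := by
    ext i j
    rw [hn]
    rfl
  simp only
  rw [← mul_smul_comm, hN, ← mul_assoc, ← mul_assoc, dualMatrix_mul_latticeBasis, smul_mul_assoc,
    one_mul, smul_mul_assoc]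

lemma exists_isometry_of_orthogonal {S : Matrix (Fin h) (Fin h) ℤ} (hS : S * Sᵀ = 1) :
    ∃ P : Matrix (Fin h) (Fin h) ℤ, IsUnit P.det ∧ Pᵀ * Amat h * P = Amat h ∧
      ∀ x, coord ((Pᵀ)⁻¹ *ᵥ x) = S *ᵥ coord x := by
  have hS' : Sᵀ * S = 1 := mul_eq_one_comm.1 hS
  obtain ⟨N, hN⟩ := exists_dualMatrix_mul_eq_mul_dualMatrix hS
  obtain ⟨N', hN'⟩ := exists_dualMatrix_mul_eq_mul_dualMatrix (S := Sᵀ)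
    (by rwa [transpose_transpose])
  have hinv : N * N' = 1 := dualMatrix_mul_left_injective <| by
    simp only
    rw [← mul_assoc, hN, mul_assoc, hN', ← mul_assoc, hS, one_mul, mul_one]
  have hbasis : N' * latticeBasis h = latticeBasis h * Sᵀ := dualMatrix_mul_left_injective <| by
    simp only
    rw [← mul_assoc, hN', mul_assoc, ← mul_assoc (dualMatrix h), dualMatrix_mul_latticeBasis,
      smul_mul_assoc, mul_smul_comm, one_mul, mul_one]
  refine ⟨N'ᵀ, ?_, ?_, fun x => ?_⟩
  · rw [det_transpose]
    exact isUnit_det_of_left_inverse hinv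
  · calc N'ᵀᵀ * Amat h * N'ᵀ
        = (2 : ℤ) • ((N' * latticeBasis h) * (N' * latticeBasis h)ᵀ) := by
          simp only [Amat_eq, transpose_transpose, transpose_mul, mul_smul_comm, smul_mul_assoc,
            mul_assoc]
      _ = (2 : ℤ) • (latticeBasis h * (Sᵀ * S) * (latticeBasis h)ᵀ) := by
          simp only [hbasis, transpose_mul, transpose_transpose, mul_assoc]
      _ = Amat h := by rw [hS', mul_one, Amat_eq]
  · rw [transpose_transpose, inv_eq_left_inv hinv, coord, coord, mulVec_mulVec, mulVec_mulVec, hN]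

lemma dotProduct_mem_Icc_of_dotProduct_self_eq_one {ι : Type*} [Fintype ι] {s t : ι → ℤ}
    (hs : s ⬝ᵥ s = 1) (ht : t ⬝ᵥ t = 1) : s ⬝ᵥ t ∈ Set.Icc (-1) 1 := by
  have hsub : 0 ≤ (s - t) ⬝ᵥ (s - t) := Finset.sum_nonneg fun i _ => mul_self_nonneg _
  have hadd : 0 ≤ (s + t) ⬝ᵥ (s + t) := Finset.sum_nonneg fun i _ => mul_self_nonneg _
  simp only [sub_dotProduct, dotProduct_sub, add_dotProduct, dotProduct_add, dotProduct_comm t s,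
    hs, ht] at hsub hadd
  exact ⟨by lia, by lia⟩

lemma discrLink_axis_axis {i j : Fin h} (hij : i ≠ j) : discrLink (axis i) (axis j) = 0 := by
  rw [axis, discrLink_axis, coord_latticeBasis_mulVec]
  simp [hij.symm]

lemma exists_orthogonal_of_map_axis_mem {φ : Coker h ≃+ Coker h}
    (hlink : ∀ c d, discrLink (φ c) (φ d) = discrLink c d) (hφ : ∀ i, φ (axis i) ∈ axisFrame h) :
    ∃ S : Matrix (Fin h) (Fin h) ℤ, S * Sᵀ = 1 ∧
      ∀ i, φ (axis i) = ckMk (latticeBasis h *ᵥ S.col i) := by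
  choose s hs hφs using fun i => mem_axisFrame_iff.1 (hφ i)
  refine ⟨(of s)ᵀ, mul_eq_one_comm.1 ?_, hφs⟩
  ext i j
  rw [transpose_transpose, mul_apply, one_apply]
  change s i ⬝ᵥ s j = _
  split_ifs with hij
  · rw [hij, hs]
  · have h4 : ((4 * (s i ⬝ᵥ s j) : ℤ) : ZMod (8 : ℕ)) = 0 := by
      rw [← discrLink_axis_axis hij, ← hlink, hφs, hφs, discrLink_ckMk, gram_latticeBasis_mulVec,
        coord_latticeBasis_mulVec, smul_dotProduct, smul_eq_mul, ← mul_assoc]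
      rfl
    obtain ⟨k, hk⟩ := (ZMod.intCast_zmod_eq_zero_iff_dvd _ 8).1 h4
    obtain ⟨hle, hge⟩ := dotProduct_mem_Icc_of_dotProduct_self_eq_one (hs i) (hs j)
    push_cast at hk
    lia

lemma inBoundaryImage_of_map_axis_mem {φ : Coker h ≃+ Coker h} (hpres : PreservesBoundaryForms h φ)
    (hφ : ∀ i, φ (axis i) ∈ axisFrame h) : InBoundaryImage h φ := by
  obtain ⟨hlink, hquad⟩ := preservesBoundaryForms_iff.1 hpres
  obtain ⟨S, hS, hφS⟩ := exists_orthogonal_of_map_axis_mem hlink hφ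
  obtain ⟨P, hdet, hP, hcoord⟩ := exists_isometry_of_orthogonal hS
  have haxis (i : Fin h) :
      φ (axis i) = ckMk ((Pᵀ)⁻¹ *ᵥ (latticeBasis h *ᵥ Pi.single i 1)) := by
    rw [hφS]
    congr 1
    refine coord_injective ?_
    rw [hcoord, coord_latticeBasis_mulVec, coord_latticeBasis_mulVec, mulVec_smul,
      mulVec_single_one]
  have hodd (x : Fin h → ℤ) (hx : Odd (x 0)) : φ (ckMk x) = ckMk ((Pᵀ)⁻¹ *ᵥ x) := by
    obtain ⟨y, hy⟩ := ckMk_surjective (φ (ckMk x))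
    obtain ⟨z, rfl⟩ : ∃ z, y = (Pᵀ)⁻¹ *ᵥ z :=
      ⟨Pᵀ *ᵥ y, by rw [mulVec_mulVec, nonsing_inv_mul _ (by rwa [det_transpose]), one_mulVec]⟩
    have hzx : ckMk z = ckMk x := by
      refine ckMk_eq_of_discrLink_axis_eq hx (fun i => ?_) ?_
      · rw [← hlink (ckMk x), ← hy, haxis, discrLink_ckMk, gram_transpose_inv_mulVec hdet hP]
        rfl
      · rw [← hquad (ckMk x), ← hy, discrQuad_ckMk, discrQuad_ckMk,
          gram_transpose_inv_mulVec hdet hP]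
    rw [← hy, ckMk_transpose_inv_mulVec_congr hdet hP hzx]
  refine ⟨P, hdet, hP, fun x => ?_⟩
  rcases Int.even_or_odd (x 0) with heven | hx
  · have hsub := hodd (x - 1) (heven.sub_odd odd_one)
    have hadd (y z : Fin h → ℤ) : ckMk (y + z) = ckMk y + ckMk z := rfl
    rw [← sub_add_cancel x 1, hadd, map_add, hsub, hodd 1 odd_one, ← hadd, ← mulVec_add]
  · exact hodd x hx

lemma inBoundaryImage_iff (h4 : h ≠ 4) {φ : AddAut (Coker h)} (hφ : PreservesBoundaryForms h φ) :
    InBoundaryImage h φ ↔ φ ∈ AddAction.stabilizer (AddAut (Coker h)) (axisFrame h) := by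
  rw [AddAction.mem_stabilizer_set' finite_axisFrame]
  exact ⟨fun him _ hc => map_mem_axisFrame_of_inBoundaryImage h4 him hc,
    fun hstab => inBoundaryImage_of_map_axis_mem hφ fun i => hstab ⟨i, .inl rfl⟩⟩

end BoundaryImage

section Reflections

variable {h : ℕ} [NeZero h]

/-- The linear map on representatives that acts on `coord` as the reflection
`u ↦ u - (u ⬝ᵥ r) • r`, when `∑ i, r i` is even. -/
def reflectionRep (r x : Fin h → ℤ) : Fin h → ℤ :=
  x - (x ⬝ᵥ r - x 0 * ((∑ i, r i) / 2)) • latticeBasis h *ᵥ r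

lemma reflectionRep_add (r x y : Fin h → ℤ) :
    reflectionRep r (x + y) = reflectionRep r x + reflectionRep r y := by
  simp only [reflectionRep, add_dotProduct, Pi.add_apply, add_mul]
  module

lemma even_sum_of_four_dvd {ι : Type*} [Fintype ι] {r : ι → ℤ} (hr : 4 ∣ r ⬝ᵥ r - 2) :
    Even (∑ i, r i) := by
  have hself : Even (r ⬝ᵥ r) := by
    obtain ⟨m, hm⟩ := hr
    exact ⟨2 * m + 1, by lia⟩
  simpa only [sub_sub_cancel] using hself.sub (even_dotProduct_self_sub_sum r)

lemma coord_dotProduct (x r : Fin h → ℤ) : coord x ⬝ᵥ r = 2 * (x ⬝ᵥ r) - x 0 * ∑ i, r i := by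
  simp only [dotProduct, coord_apply, sub_mul, Finset.sum_sub_distrib, Finset.mul_sum, mul_assoc]

lemma coord_reflectionRep {r : Fin h → ℤ} (hr : Even (∑ i, r i)) (x : Fin h → ℤ) :
    coord (reflectionRep r x) = coord x - (coord x ⬝ᵥ r) • r := by
  obtain ⟨k, hk⟩ := hr
  have hcoeff : coord x ⬝ᵥ r = 2 * (x ⬝ᵥ r - x 0 * ((∑ i, r i) / 2)) := by
    rw [coord_dotProduct, hk, ← two_mul, Int.mul_ediv_cancel_left _ two_ne_zero]
    ring
  rw [reflectionRep, coord, mulVec_sub, mulVec_smul, ← coord, ← coord, coord_latticeBasis_mulVec,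
    hcoeff]
  module

lemma ckMk_reflectionRep_congr {r : Fin h → ℤ} (hr : Even (∑ i, r i)) {x y : Fin h → ℤ}
    (hxy : ckMk x = ckMk y) : ckMk (reflectionRep r x) = ckMk (reflectionRep r y) := by
  obtain ⟨d, hd, hxy⟩ := ckMk_eq_iff_coord.1 hxy
  refine ckMk_eq_iff_coord.2 ⟨d - (d ⬝ᵥ r) • r, ?_, ?_⟩
  · simp only [Pi.sub_apply, Pi.smul_apply, smul_eq_mul, Finset.sum_sub_distrib, ← Finset.mul_sum]
    exact hd.sub (hr.mul_left _)
  · rw [coord_reflectionRep hr, coord_reflectionRep hr, hxy, add_dotProduct, smul_dotProduct]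
    module

lemma ckMk_reflectionRep_reflectionRep {r : Fin h → ℤ} (hr : 4 ∣ r ⬝ᵥ r - 2) (x : Fin h → ℤ) :
    ckMk (reflectionRep r (reflectionRep r x)) = ckMk x := by
  have hsum := even_sum_of_four_dvd hr
  obtain ⟨m, hm⟩ := hr
  refine ckMk_eq_iff_coord.2 ⟨(m * (coord x ⬝ᵥ r)) • r, ?_, ?_⟩
  · simp only [Pi.smul_apply, smul_eq_mul, ← Finset.mul_sum]
    exact hsum.mul_left _
  · rw [coord_reflectionRep hsum, coord_reflectionRep hsum, sub_dotProduct, smul_dotProduct,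
      smul_eq_mul, eq_add_of_sub_eq' hm]
    module

/-- The automorphism of `ℤ^h / A_h ℤ^h` given on representatives by `reflectionRep r`. As
`r ⬝ᵥ r = 2` is required only modulo `4`, the map `u ↦ u - (u ⬝ᵥ r) • r` need not be an isometry. -/
def discrReflection (r : Fin h → ℤ) (hr : 4 ∣ r ⬝ᵥ r - 2) : Coker h ≃+ Coker h :=
  let f : Coker h → Coker h := Quotient.lift (fun x => ckMk (reflectionRep r x)) fun _ _ hxy =>
    ckMk_reflectionRep_congr (even_sum_of_four_dvd hr) (Quotient.sound hxy)
  have hf : Function.Involutive f := by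
    intro c
    obtain ⟨x, rfl⟩ := ckMk_surjective c
    exact ckMk_reflectionRep_reflectionRep hr x
  { hf.toPerm with
    map_add' := by
      intro c d
      obtain ⟨x, rfl⟩ := ckMk_surjective c
      obtain ⟨y, rfl⟩ := ckMk_surjective d
      exact congrArg ckMk (reflectionRep_add r x y) }

variable {r : Fin h → ℤ}

lemma discrReflection_ckMk (hr : 4 ∣ r ⬝ᵥ r - 2) (x : Fin h → ℤ) :
    discrReflection r hr (ckMk x) = ckMk (reflectionRep r x) := rfl

lemma discrReflection_involutive (hr : 4 ∣ r ⬝ᵥ r - 2) :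
    Function.Involutive (discrReflection r hr) :=
  (discrReflection r hr).symm_apply_apply

lemma sixteen_dvd_gram_reflectionRep_sub (hr : 4 ∣ r ⬝ᵥ r - 2) (x y : Fin h → ℤ) :
    16 ∣ gram (reflectionRep r x) (reflectionRep r y) - gram x y := by
  have hsum := even_sum_of_four_dvd hr
  have heven (z : Fin h → ℤ) : 2 ∣ coord z ⬝ᵥ r := by
    rw [coord_dotProduct]
    exact even_iff_two_dvd.1 ((even_two_mul _).sub (hsum.mul_left _))
  have hdiff : gram (reflectionRep r x) (reflectionRep r y) - gram x y =
      (coord x ⬝ᵥ r) * (coord y ⬝ᵥ r) * (r ⬝ᵥ r - 2) := by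
    simp only [gram, coord_reflectionRep hsum, sub_dotProduct, dotProduct_sub, smul_dotProduct,
      dotProduct_smul, smul_eq_mul, dotProduct_comm r]
    ring
  rw [hdiff]
  exact mul_dvd_mul (mul_dvd_mul (heven x) (heven y)) hr

lemma discrReflection_mem_boundaryFormGroup (hr : 4 ∣ r ⬝ᵥ r - 2) :
    (discrReflection r hr : AddAut (Coker h)) ∈ boundaryFormGroup h := by
  refine preservesBoundaryForms_iff.2 ⟨fun c d => ?_, fun c => ?_⟩ <;>
  obtain ⟨x, rfl⟩ := ckMk_surjective c
  · obtain ⟨y, rfl⟩ := ckMk_surjective d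
    exact ((ZMod.intCast_eq_intCast_iff_dvd_sub _ _ 8).2
      (Dvd.dvd.trans (by norm_num) (sixteen_dvd_gram_reflectionRep_sub hr x y))).symm
  · exact ((ZMod.intCast_eq_intCast_iff_dvd_sub _ _ 16).2
      (sixteen_dvd_gram_reflectionRep_sub hr x x)).symm

lemma discrLink_discrReflection_axis (hr : 4 ∣ r ⬝ᵥ r - 2) (c : Coker h) (i : Fin h) :
    discrLink (discrReflection r hr c) (axis i) =
      discrLink c (axis i) - r i * ∑ j, r j * discrLink c (axis j) := by
  obtain ⟨x, rfl⟩ := ckMk_surjective c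
  rw [discrReflection_ckMk]
  simp only [discrLink_axis, coord_reflectionRep (even_sum_of_four_dvd hr), Pi.sub_apply,
    Pi.smul_apply, smul_eq_mul, dotProduct]
  push_cast
  simp only [mul_sub, Finset.mul_sum, Finset.sum_mul]
  congr 1
  exact Finset.sum_congr rfl fun j _ => by ring

end Reflections

section Labels

lemma mem_iff_notMem_of_card_inter_pair_eq_one {α : Type*} [DecidableEq α] {s : Finset α}
    {x y : α} (hxy : x ≠ y) (hs : (s ∩ {x, y}).card = 1) : x ∈ s ↔ y ∉ s := by
  by_cases hx : x ∈ s <;> by_cases hy : y ∈ s <;>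
  simp_all [Finset.inter_insert_of_mem, Finset.inter_insert_of_notMem]

lemma exists_forall_mem_of_pairwise_card_inter_eq_one {ι α : Type*} [Fintype ι] [DecidableEq α]
    {T : ι → Finset α} (hι : 4 ≤ Fintype.card ι) (hT : ∀ i, (T i).card = 2)
    (hinter : Pairwise fun i j => (T i ∩ T j).card = 1) : ∃ k, ∀ i, k ∈ T i := by
  have mem_iff {i j : ι} {x y : α} (hji : j ≠ i) (hxy : x ≠ y) (hx : x ∈ T i) (hy : y ∈ T i) :
      x ∈ T j ↔ y ∉ T j := by
    have hpair : {x, y} = T i :=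
      Finset.eq_of_subset_of_card_le (Finset.insert_subset hx (Finset.singleton_subset_iff.2 hy))
        (by rw [hT, Finset.card_pair hxy])
    exact mem_iff_notMem_of_card_inter_pair_eq_one hxy (hpair ▸ hinter hji)
  obtain ⟨i₀, i₁, h01⟩ := Fintype.exists_pair_of_one_lt_card (show 1 < Fintype.card ι by lia)
  obtain ⟨k, hk⟩ := Finset.card_eq_one.1 (hinter h01)
  have hmem_k (x : α) : x ∈ T i₀ ∧ x ∈ T i₁ ↔ x = k := by
    rw [← Finset.mem_inter, hk, Finset.mem_singleton]
  refine ⟨k, fun i₂ => ?_⟩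
  by_contra hk2
  have hk0 : k ∈ T i₀ := ((hmem_k k).2 rfl).1
  have hk1 : k ∈ T i₁ := ((hmem_k k).2 rfl).2
  have h02 : i₀ ≠ i₂ := fun h => hk2 (h ▸ hk0)
  have h12 : i₁ ≠ i₂ := fun h => hk2 (h ▸ hk1)
  classical
  obtain ⟨i₃, -, hi₃⟩ : ∃ i₃ ∈ Finset.univ, i₃ ∉ ({i₀, i₁, i₂} : Finset ι) :=
    Finset.exists_mem_notMem_of_card_lt_card (Finset.card_le_three.trans_lt hι)
  simp only [Finset.mem_insert, Finset.mem_singleton, not_or] at hi₃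
  obtain ⟨h30, h31, h32⟩ := hi₃
  obtain ⟨a, ha⟩ := Finset.card_eq_one.1 (hinter h02)
  obtain ⟨b, hb⟩ := Finset.card_eq_one.1 (hinter h12)
  have ha' : a ∈ T i₀ ∧ a ∈ T i₂ := Finset.mem_inter.1 (ha ▸ Finset.mem_singleton_self a)
  have hb' : b ∈ T i₁ ∧ b ∈ T i₂ := Finset.mem_inter.1 (hb ▸ Finset.mem_singleton_self b)
  have hka : k ≠ a := fun h => hk2 (h ▸ ha'.2)
  have hkb : k ≠ b := fun h => hk2 (h ▸ hb'.2)
  have hab : a ≠ b := fun h => hka ((hmem_k a).1 ⟨ha'.1, h ▸ hb'.1⟩).symm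
  have hka3 := mem_iff h30 hka hk0 ha'.1
  have hkb3 := mem_iff h31 hkb hk1 hb'.1
  have hab3 := mem_iff h32 hab ha'.2 hb'.2
  tauto

variable {h : ℕ} [NeZero h]

lemma exists_coord_eq_two_smul_add {c : Coker h} {p : Fin h → ℤ}
    (hc : ∀ i, discrLink c (axis i) = 4 * p i) :
    ∃ x d : Fin h → ℤ, c = ckMk x ∧ coord x = (2 : ℤ) • p + (4 : ℤ) • d := by
  obtain ⟨x, rfl⟩ := ckMk_surjective c
  obtain ⟨d, hd⟩ := exists_coord_eq_add_four_smul (x := x) (y := latticeBasis h *ᵥ p) fun i => by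
    rw [hc, discrLink_axis, coord_latticeBasis_mulVec]
    simp only [Pi.smul_apply, smul_eq_mul]
    push_cast
    ring
  exact ⟨x, d, rfl, by rw [hd, coord_latticeBasis_mulVec]⟩

lemma discrLink_eq_four_mul_dotProduct {c d : Coker h} {p q : Fin h → ℤ}
    (hc : ∀ i, discrLink c (axis i) = 4 * p i) (hd : ∀ i, discrLink d (axis i) = 4 * q i) :
    discrLink c d = 4 * (p ⬝ᵥ q : ℤ) := by
  obtain ⟨x, a, rfl, hx⟩ := exists_coord_eq_two_smul_add hc
  obtain ⟨y, b, rfl, hy⟩ := exists_coord_eq_two_smul_add hd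
  have hgram : gram x y = 4 * (p ⬝ᵥ q) + 8 * (a ⬝ᵥ q + p ⬝ᵥ b + 2 * (a ⬝ᵥ b)) := by
    simp only [gram, hx, hy, add_dotProduct, dotProduct_add, smul_dotProduct, dotProduct_smul,
      smul_eq_mul]
    ring
  rw [discrLink_ckMk, hgram]
  push_cast
  rw [show (8 : ZMod 8) = 0 from rfl]
  ring

lemma discrLink_neg_left (c d : Coker h) : discrLink (-c) d = -discrLink c d := by
  obtain ⟨x, rfl⟩ := ckMk_surjective c
  obtain ⟨y, rfl⟩ := ckMk_surjective d
  change ((gram (-x) y : ℤ) : ZMod 8) = -((gram x y : ℤ) : ZMod 8)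
  rw [gram, coord_neg, neg_dotProduct, Int.cast_neg]
  rfl

/-- The vector `eᵢ` attached to the pair `s = {i, 7}`, or `∑ₖ eₖ - eᵢ - eⱼ` attached to
`s = {i, j}` with `i, j < 7`. Modulo `2ℤ^7` these represent the classes on which `∂θ` is `1/4`. -/
def pairVector (s : Finset (Fin 8)) (i : Fin 7) : ℤ :=
  if i.castSucc ∈ s ↔ Fin.last 7 ∈ s then 1 else 0

/-- The class `c` is represented, modulo `2ℤ^7`, by the vector attached to the pair `s`. -/
def IsLabel (s : Finset (Fin 8)) (c : Coker 7) : Prop :=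
  s.card = 2 ∧ ∀ i, discrLink c (axis i) = 4 * pairVector s i

/-- The classes labelled by the seven pairs that contain `k`. -/
def frame (k : Fin 8) : Set (Coker 7) := {c | ∃ s, IsLabel s c ∧ k ∈ s}

lemma IsLabel.neg {s : Finset (Fin 8)} {c : Coker 7} (hc : IsLabel s c) : IsLabel s (-c) := by
  refine ⟨hc.1, fun i => ?_⟩
  rw [discrLink_neg_left, hc.2 i, neg_eq_iff_add_eq_zero, ← two_mul, ← mul_assoc]
  exact zero_mul _

lemma pairVector_pair_last (i : Fin 7) : pairVector {i.castSucc, Fin.last 7} = Pi.single i 1 := by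
  ext j
  have hj := j.castSucc_ne_last
  simp only [pairVector, Finset.mem_insert, Finset.mem_singleton, Fin.castSucc_inj, hj, or_false,
    or_true, iff_true, Pi.single_apply]

lemma isLabel_pair_last_axis (i : Fin 7) : IsLabel {i.castSucc, Fin.last 7} (axis i) := by
  refine ⟨Finset.card_pair i.castSucc_ne_last, fun j => ?_⟩
  rw [axis, discrLink_axis, coord_latticeBasis_mulVec, pairVector_pair_last]
  simp only [Pi.smul_apply, smul_eq_mul]
  push_cast
  ring

lemma isLabel_ckMk_pairVector {s : Finset (Fin 8)} (hs : s.card = 2) :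
    IsLabel s (ckMk (latticeBasis 7 *ᵥ pairVector s)) := by
  refine ⟨hs, fun i => ?_⟩
  rw [discrLink_axis, coord_latticeBasis_mulVec]
  simp only [Pi.smul_apply, smul_eq_mul]
  push_cast
  ring

lemma frame_last : frame (Fin.last 7) = axisFrame 7 := by
  ext c
  constructor
  · rintro ⟨s, ⟨hs, hc⟩, hlast⟩
    obtain ⟨b, hb, rfl⟩ : ∃ b, b ≠ Fin.last 7 ∧ s = {b, Fin.last 7} := by
      obtain ⟨a, b, hab, rfl⟩ := Finset.card_eq_two.1 hs
      rcases Finset.mem_insert.1 hlast with rfl | hb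
      · exact ⟨b, hab.symm, Finset.pair_comm _ _⟩
      · exact ⟨a, Finset.mem_singleton.1 hb ▸ hab, by rw [Finset.mem_singleton.1 hb]⟩
    obtain ⟨i, rfl⟩ := Fin.exists_castSucc_eq.2 hb
    refine mem_axisFrame_of_discrLink_eq (i := i) fun j => ?_
    rw [hc, pairVector_pair_last, Pi.single_apply]
    split_ifs <;> simp
  · rintro ⟨i, rfl | rfl⟩
    · exact ⟨_, isLabel_pair_last_axis i, by simp⟩
    · exact ⟨_, (isLabel_pair_last_axis i).neg, by simp⟩

lemma even_of_discrQuad_eq_four {x : Fin 7 → ℤ} (hx : discrQuad (ckMk x) = 4) : Even (x 0) := by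
  by_contra hodd
  rw [Int.not_even_iff_odd] at hodd
  have hsum : ∑ i, (coord x i ^ 2 - 1) = gram x x - 7 := by
    simp [gram, dotProduct, pow_two]
  have h8 : (8 : ℤ) ∣ gram x x - 7 :=
    hsum ▸ Finset.dvd_sum fun i _ => Int.eight_dvd_sq_sub_one_of_odd (odd_coord hodd i)
  have h16 : (16 : ℤ) ∣ gram x x - 4 :=
    (ZMod.intCast_eq_intCast_iff_dvd_sub 4 _ 16).1 hx.symm
  lia

lemma exists_pairVector_eq_indicator {T : Finset (Fin 7)} (hT : T.card % 4 = 1) :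
    ∃ s, s.card = 2 ∧ ∀ i, pairVector s i = if i ∈ T then 1 else 0 := by
  have hle : T.card ≤ 7 := Finset.card_le_univ T
  obtain h1 | h5 : T.card = 1 ∨ T.card = 5 := by lia
  · obtain ⟨b, rfl⟩ := Finset.card_eq_one.1 h1
    refine ⟨{b.castSucc, Fin.last 7}, Finset.card_pair b.castSucc_ne_last, fun i => ?_⟩
    rw [pairVector_pair_last, Pi.single_apply]
    simp only [Finset.mem_singleton]
  · refine ⟨Tᶜ.map Fin.castSuccEmb, by rw [Finset.card_map, Finset.card_compl, h5]; rfl,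
      fun i => ?_⟩
    have hlast : Fin.last 7 ∉ Tᶜ.map Fin.castSuccEmb := by
      simpa only [Finset.mem_map, not_exists, not_and] using fun j _ => j.castSucc_ne_last
    have hi : i.castSucc ∈ Tᶜ.map Fin.castSuccEmb ↔ i ∉ T :=
      (Finset.mem_map' Fin.castSuccEmb).trans Finset.mem_compl
    simp only [pairVector, hlast, hi, iff_false, not_not]

lemma dotProduct_self_modEq_card_odd {ι : Type*} [Fintype ι] (v : ι → ℤ) :
    v ⬝ᵥ v ≡ ({i | Odd (v i)} : Finset ι).card [ZMOD 4] := by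
  rw [Finset.card_filter, Nat.cast_sum]
  refine Int.ModEq.sum fun i _ => ?_
  rw [← pow_two]
  split_ifs with hi
  · exact Int.sq_mod_four_eq_one_of_odd hi
  · obtain ⟨k, hk⟩ := Int.not_odd_iff_even.1 hi
    exact Int.modEq_zero_iff_dvd.2 ⟨k ^ 2, by rw [hk]; ring⟩

lemma exists_isLabel_of_discrQuad_eq_four {c : Coker 7} (hc : discrQuad c = 4) :
    ∃ s, IsLabel s c := by
  obtain ⟨x, rfl⟩ := ckMk_surjective c
  obtain ⟨v, rfl⟩ := exists_eq_latticeBasis_mulVec (even_of_discrQuad_eq_four hc)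
  have hself : 16 ∣ 4 * (v ⬝ᵥ v) - 4 := by
    rw [discrQuad_ckMk, gram_latticeBasis_mulVec, coord_latticeBasis_mulVec, smul_dotProduct,
      smul_eq_mul, ← mul_assoc] at hc
    exact (ZMod.intCast_eq_intCast_iff_dvd_sub 4 _ 16).1 hc.symm
  have hcard := (dotProduct_self_modEq_card_odd v).dvd
  obtain ⟨s, hs, hsv⟩ :=
    exists_pairVector_eq_indicator (T := {i | Odd (v i)}) (by lia)
  refine ⟨s, hs, fun i => ?_⟩
  rw [discrLink_axis, coord_latticeBasis_mulVec, hsv, Pi.smul_apply, smul_eq_mul]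
  have hparity : 2 ∣ (if Odd (v i) then 1 else 0) - v i := by
    split_ifs with hi
    · exact (odd_one.sub_odd hi).two_dvd
    · exact (Even.zero.sub (Int.not_odd_iff_even.1 hi)).two_dvd
  simp only [Finset.mem_filter_univ]
  have hdvd := (ZMod.intCast_eq_intCast_iff_dvd_sub (2 * (2 * v i))
    (4 * if Odd (v i) then 1 else 0) 8).2 (by push_cast; lia)
  exact_mod_cast hdvd

lemma card_inter_eq_one_of_even_dotProduct_pairVector : ∀ s : Finset (Fin 8), s.card = 2 →
    ∀ t : Finset (Fin 8), t.card = 2 → Even (pairVector s ⬝ᵥ pairVector t) →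
      (s ∩ t).card = 1 := by
  decide +kernel

lemma IsLabel.card_inter_eq_one {s t : Finset (Fin 8)} {c d : Coker 7} (hc : IsLabel s c)
    (hd : IsLabel t d) (hcd : discrLink c d = 0) : (s ∩ t).card = 1 := by
  refine card_inter_eq_one_of_even_dotProduct_pairVector s hc.1 t hd.1 ?_
  rw [discrLink_eq_four_mul_dotProduct hc.2 hd.2] at hcd
  obtain ⟨k, hk⟩ := (ZMod.intCast_zmod_eq_zero_iff_dvd (4 * (pairVector s ⬝ᵥ pairVector t)) 8).1
    (by exact_mod_cast hcd)
  exact ⟨k, by push_cast at hk; lia⟩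

lemma discrQuad_axis (i : Fin h) : discrQuad (axis i) = 4 := by
  rw [axis, discrQuad_ckMk, gram_latticeBasis_mulVec, coord_latticeBasis_mulVec]
  simp

lemma exists_vadd_axisFrame_subset_frame {φ : AddAut (Coker 7)} (hφ : φ ∈ boundaryFormGroup 7) :
    ∃ k, φ +ᵥ axisFrame 7 ⊆ frame k := by
  obtain ⟨hlink, hquad⟩ := preservesBoundaryForms_iff.1 hφ
  choose T hT using fun i =>
    exists_isLabel_of_discrQuad_eq_four ((hquad (axis i)).trans (discrQuad_axis i))
  obtain ⟨k, hk⟩ := exists_forall_mem_of_pairwise_card_inter_eq_one (T := T) (by simp)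
    (fun i => (hT i).1) fun i j hij =>
      (hT i).card_inter_eq_one (hT j) ((hlink _ _).trans (discrLink_axis_axis hij))
  refine ⟨k, Set.vadd_set_subset_iff.2 ?_⟩
  rintro _ ⟨i, rfl | rfl⟩
  · exact ⟨T i, hT i, hk i⟩
  · exact ⟨T i, by rw [AddAut.vadd_def, map_neg]; exact (hT i).neg, hk i⟩

/-- The sum of the standard basis vectors other than `eₖ`. -/
def coaxis (k : Fin 7) : Fin 7 → ℤ := 1 - Pi.single k 1

lemma four_dvd_coaxis (k : Fin 7) : 4 ∣ coaxis k ⬝ᵥ coaxis k - 2 := by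
  revert k
  decide +kernel

lemma pairVector_map_swap : ∀ k : Fin 7, ∀ s : Finset (Fin 8), s.card = 2 → ∀ i,
    2 ∣ pairVector (s.map (Equiv.swap k.castSucc (Fin.last 7)).toEmbedding) i -
      (pairVector s i - coaxis k i * (coaxis k ⬝ᵥ pairVector s)) := by
  decide +kernel

lemma IsLabel.map_swap {s : Finset (Fin 8)} {c : Coker 7} (hc : IsLabel s c) (k : Fin 7) :
    IsLabel (s.map (Equiv.swap k.castSucc (Fin.last 7)).toEmbedding)
      (discrReflection (coaxis k) (four_dvd_coaxis k) c) := by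
  refine ⟨by rw [Finset.card_map, hc.1], fun i => ?_⟩
  obtain ⟨m, hm⟩ := pairVector_map_swap k s hc.1 i
  have hreflect : discrLink (discrReflection (coaxis k) (four_dvd_coaxis k) c) (axis i) =
      4 * (pairVector s i - coaxis k i * (coaxis k ⬝ᵥ pairVector s) : ℤ) := by
    rw [discrLink_discrReflection_axis]
    simp only [hc.2, dotProduct]
    push_cast
    simp only [mul_sub, Finset.mul_sum]
    congr 1
    exact Finset.sum_congr rfl fun j _ => by ring
  rw [hreflect, eq_add_of_sub_eq hm]
  push_cast
  rw [mul_add, ← mul_assoc, show (4 * 2 : ZMod 8) = 0 from rfl, zero_mul, zero_add]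

lemma discrReflection_mem_frame (k : Fin 7) {j : Fin 8} {c : Coker 7} (hc : c ∈ frame j) :
    discrReflection (coaxis k) (four_dvd_coaxis k) c ∈
      frame (Equiv.swap k.castSucc (Fin.last 7) j) := by
  obtain ⟨s, hs, hj⟩ := hc
  exact ⟨_, hs.map_swap k, Finset.mem_map_of_mem _ hj⟩

lemma exists_vadd_axisFrame_eq_frame (k : Fin 8) :
    ∃ φ ∈ boundaryFormGroup 7, φ +ᵥ axisFrame 7 = frame k := by
  rw [← frame_last]
  cases k using Fin.lastCases with
  | last => exact ⟨0, zero_mem _, zero_vadd _ _⟩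
  | cast k =>
    refine ⟨_, discrReflection_mem_boundaryFormGroup (four_dvd_coaxis k), ?_⟩
    refine (Set.vadd_set_subset_iff.2 fun c hc => ?_).antisymm fun c hc =>
      ⟨_, ?_, discrReflection_involutive (four_dvd_coaxis k) c⟩
    · rw [AddAut.vadd_def, ← Equiv.swap_apply_right k.castSucc (Fin.last 7)]
      exact discrReflection_mem_frame k hc
    · simpa only [Equiv.swap_apply_left] using discrReflection_mem_frame k hc

lemma eq_of_pairVector_eq : ∀ s : Finset (Fin 8), s.card = 2 → ∀ t : Finset (Fin 8),
    t.card = 2 → pairVector s = pairVector t → s = t := by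
  decide +kernel

lemma IsLabel.unique {s t : Finset (Fin 8)} {c : Coker 7} (hs : IsLabel s c) (ht : IsLabel t c) :
    s = t := by
  refine eq_of_pairVector_eq s hs.1 t ht.1 (funext fun i => ?_)
  have hi := (hs.2 i).symm.trans (ht.2 i)
  revert hi
  simp only [pairVector]
  split_ifs <;> decide

lemma frame_injective : Function.Injective frame := by
  intro k k' hkk'
  by_contra hne
  obtain ⟨l, -, hl⟩ : ∃ l ∈ Finset.univ, l ∉ ({k, k'} : Finset (Fin 8)) :=
    Finset.exists_mem_notMem_of_card_lt_card (Finset.card_le_two.trans_lt (by decide))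
  simp only [Finset.mem_insert, Finset.mem_singleton, not_or] at hl
  have hlabel := isLabel_ckMk_pairVector (Finset.card_pair (Ne.symm hl.1))
  have hmem : ckMk (latticeBasis 7 *ᵥ pairVector {k, l}) ∈ frame k :=
    ⟨_, hlabel, Finset.mem_insert_self _ _⟩
  obtain ⟨t, ht, hk't⟩ := hkk' ▸ hmem
  rw [← hlabel.unique ht, Finset.mem_insert, Finset.mem_singleton] at hk't
  exact hk't.elim (Ne.symm hne) (Ne.symm hl.2)

lemma orbit_axisFrame :
    AddAction.orbit (boundaryFormGroup 7) (axisFrame 7) = Set.range frame := by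
  ext F
  constructor
  · rintro ⟨φ, rfl⟩
    obtain ⟨k, hk⟩ := exists_vadd_axisFrame_subset_frame φ.2
    obtain ⟨ψ, -, hψ⟩ := exists_vadd_axisFrame_eq_frame k
    refine ⟨k, (Set.eq_of_subset_of_ncard_le hk ?_ ?_).symm⟩
    · rw [← hψ, Set.ncard_vadd_set, Set.ncard_vadd_set]
    · exact hψ ▸ finite_axisFrame.vadd_set
  · rintro ⟨k, rfl⟩
    obtain ⟨φ, hφ, hk⟩ := exists_vadd_axisFrame_eq_frame k
    exact ⟨⟨φ, hφ⟩, hk⟩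

lemma index_stabilizer_axisFrame :
    (AddAction.stabilizer (boundaryFormGroup 7) (axisFrame 7)).index = 8 := by
  rw [AddAction.index_stabilizer, orbit_axisFrame, Set.ncard_range_of_injective frame_injective]
  simp

end Labels

section Index

variable {h : ℕ} [NeZero h]

lemma card_preservesBoundaryForms_eq_index_mul (h4 : h ≠ 4) :
    Nat.card {φ : Coker h ≃+ Coker h // PreservesBoundaryForms h φ} =
      (AddAction.stabilizer (boundaryFormGroup h) (axisFrame h)).index *
        Nat.card {φ : Coker h ≃+ Coker h //
          PreservesBoundaryForms h φ ∧ InBoundaryImage h φ} := by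
  have himage : Nat.card (AddAction.stabilizer (boundaryFormGroup h) (axisFrame h)) =
      Nat.card {φ : Coker h ≃+ Coker h // PreservesBoundaryForms h φ ∧ InBoundaryImage h φ} :=
    Nat.card_congr <| (Equiv.subtypeEquivRight fun φ => (inBoundaryImage_iff h4 φ.2).symm).trans
      (Equiv.subtypeSubtypeEquivSubtypeInter _ (InBoundaryImage h))
  rw [← himage, mul_comm]
  exact (AddSubgroup.card_mul_index (G := boundaryFormGroup h) _).symm

lemma exists_not_inBoundaryImage_of_index_ne_one (h4 : h ≠ 4)
    (hindex : (AddAction.stabilizer (boundaryFormGroup h) (axisFrame h)).index ≠ 1) :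
    ∃ φ, PreservesBoundaryForms h φ ∧ ¬ InBoundaryImage h φ := by
  contrapose! hindex
  rw [AddSubgroup.index_eq_one, AddSubgroup.eq_top_iff']
  exact fun φ => (inBoundaryImage_iff h4 φ.2).1 (hindex φ φ.2)

end Index

end BoundaryForms

/-- For h = 7, the image of the boundary map ∂ has index 8 in the group of all
automorphisms of the boundary forms; in particular ∂ is not surjective. -/
theorem boundary_map_index_h7 :
    Nat.card {φ : Coker 7 ≃+ Coker 7 // PreservesBoundaryForms 7 φ} =
      8 * Nat.card {φ : Coker 7 ≃+ Coker 7 //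
        PreservesBoundaryForms 7 φ ∧ InBoundaryImage 7 φ} ∧
    ∃ φ : Coker 7 ≃+ Coker 7, PreservesBoundaryForms 7 φ ∧ ¬ InBoundaryImage 7 φ := by
  have h7 : 7 ≠ 4 := by decide
  have hindex := BoundaryForms.index_stabilizer_axisFrame
  constructor
  · rw [BoundaryForms.card_preservesBoundaryForms_eq_index_mul h7, hindex]
  · exact BoundaryForms.exists_not_inBoundaryImage_of_index_ne_one h7 (by rw [hindex]; decide)
end
end
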